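/- For every fixed integer r ≥ 2 there exists a constant c = c(r) > 0 such that for all n ≥ 2 one has t^(r)(n) ≥ c · n^{(3/5)·(1/(2^{r-1}-1))}; that is, every ordered r-matching of size n contains a pair of twins of size at least c · n^{3/(5(2^{r-1}-1))}. -/

import Mathlib

/-- A (sub-)matching: a finite set of pairwise disjoint `r`-element subsets
("edges") of the linearly ordered vertex set `ℕ`. -/
def IsMatching (r : ℕ) (M : Finset (Finset ℕ)) : Prop :=
  (∀ e ∈ M, e.card = r) ∧ ∀ e ∈ M, ∀ f ∈ M, e ≠ f → Disjoint e f

/-- The vertex support of a matching: the union of its edges. -/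
def mSupport (M : Finset (Finset ℕ)) : Finset ℕ := M.sup id

/-- An ordered `r`-matching of size `n`: `n` pairwise disjoint `r`-element edges
partitioning `[rn] = {1, …, rn}`. -/
def IsOrderedMatching (r n : ℕ) (M : Finset (Finset ℕ)) : Prop :=
  IsMatching r M ∧ M.card = n ∧ mSupport M = Finset.Icc 1 (r * n)

/-- Two ordered matchings are isomorphic if some (equivalently, the unique)
order-preserving bijection between their vertex supports maps edges onto edges. -/
def MatchIso (M N : Finset (Finset ℕ)) : Prop :=
  ∃ f : ℕ → ℕ, Set.BijOn f (mSupport M : Set ℕ) (mSupport N : Set ℕ) ∧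
    (∀ x ∈ mSupport M, ∀ y ∈ mSupport M, x < y → f x < f y) ∧
    N = M.image fun e => e.image f

/-- `M` contains twins of size `k`: a pair of vertex-disjoint isomorphic
sub-matchings of `M`, each with `k` edges. -/
def HasTwins (M : Finset (Finset ℕ)) (k : ℕ) : Prop :=
  ∃ M₁ M₂ : Finset (Finset ℕ), M₁ ⊆ M ∧ M₂ ⊆ M ∧
    Disjoint (mSupport M₁) (mSupport M₂) ∧ MatchIso M₁ M₂ ∧
    M₁.card = k ∧ M₂.card = k

/-- `t(M)`: the maximum size of twins in `M`. -/
noncomputable def twinMax (M : Finset (Finset ℕ)) : ℕ := sSup {k | HasTwins M k}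

/-- `t^(r)(n)`: the minimum of `t(M)` over all ordered `r`-matchings of size `n`. -/
noncomputable def minTwins (r n : ℕ) : ℕ :=
  sInf {t | ∃ M, IsOrderedMatching r n M ∧ twinMax M = t}

/-- A permutation `π` of `[n]` has twins of length `k`: two order-isomorphic
subsequences occupying disjoint sets of positions. -/
def PermTwins {n : ℕ} (π : Equiv.Perm (Fin n)) (k : ℕ) : Prop :=
  ∃ a b : Fin k → Fin n, StrictMono a ∧ StrictMono b ∧
    (∀ i j, a i ≠ b j) ∧ ∀ i j, (π (a i) < π (a j) ↔ π (b i) < π (b j))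

/-- `τ(n)`: the largest `k` such that every permutation of `[n]` has twins of length `k`. -/
noncomputable def permTau (n : ℕ) : ℕ :=
  sSup {k | ∀ π : Equiv.Perm (Fin n), PermTwins π k}

/-- An `r`-pattern, represented by its canonical representative: an ordered
`r`-matching of size `2` (on the vertex set `[2r]`). Every isomorphism class of
ordered `r`-matchings of size `2` contains exactly one such representative. -/
def IsPattern (r : ℕ) (P : Finset (Finset ℕ)) : Prop := IsOrderedMatching r 2 P

/-- A `P`-clique: a matching all of whose pairs of (distinct) edges form the pattern `P`. -/
def IsPClique (P M : Finset (Finset ℕ)) : Prop :=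
  ∀ e ∈ M, ∀ f ∈ M, e ≠ f → MatchIso {e, f} P

/-- `L(M)`: the size of the largest sub-matching of `M` that is a `P`-clique,
over all `r`-patterns `P`. -/
noncomputable def cliqueMax (r : ℕ) (M : Finset (Finset ℕ)) : ℕ :=
  sSup {k | ∃ P, IsPattern r P ∧ ∃ M' ⊆ M, IsPClique P M' ∧ M'.card = k}

/-- `L_r(n)`: the minimum of `L(M)` over all ordered `r`-matchings of size `n`. -/
noncomputable def minClique (r n : ℕ) : ℕ :=
  sInf {l | ∃ M, IsOrderedMatching r n M ∧ cliqueMax r M = l}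

section
open Finset

/-- Mirsky-type lemma. -/
theorem mirsky {α : Type*} [DecidableEq α] (lt : α → α → Prop)
    (htr : ∀ a b c, lt a b → lt b c → lt a c) (hirr : ∀ a, ¬ lt a a) (s : ℕ) :
    ∀ (t : ℕ) (S : Finset α),
    (∀ A ⊆ S, (∀ a ∈ A, ∀ b ∈ A, a ≠ b → ¬ lt a b) → A.card ≤ s) → t * s < S.card →
    ∃ C ⊆ S, C.card = t + 1 ∧ ∀ a ∈ C, ∀ b ∈ C, a ≠ b → lt a b ∨ lt b a := by
  classical
  have key : ∀ (t : ℕ) (S : Finset α),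
    (∀ A ⊆ S, (∀ a ∈ A, ∀ b ∈ A, a ≠ b → ¬ lt a b) → A.card ≤ s) → t * s < S.card →
    ∃ C ⊆ S, C.card = t + 1 ∧ (∀ a ∈ C, ∀ b ∈ C, a ≠ b → lt a b ∨ lt b a) ∧
      ∃ m ∈ C, ∀ b ∈ C, b ≠ m → lt m b := by
    intro t
    induction t with
    | zero =>
      intro S _ hc
      obtain ⟨a, ha⟩ := Finset.card_pos.1 (by omega : 0 < S.card)
      refine ⟨{a}, by simpa using ha, by simp, ?_, a, by simp, ?_⟩ <;> simp
    | succ t ih =>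
      intro S hS hc
      let Mn := S.filter (fun a => ∀ b ∈ S, ¬ lt b a)
      have hM : Mn.card ≤ s := by
        apply hS _ (filter_subset _ _)
        intro a ha b hb _
        exact (mem_filter.1 hb).2 a (mem_filter.1 ha).1
      have hcard : (S \ Mn).card + Mn.card = S.card :=
        card_sdiff_add_card_eq_card (filter_subset _ _)
      obtain ⟨C, hC, hCc, hch, m, hm, hmin⟩ := ih (S \ Mn)
        (fun A hA => hS A (hA.trans sdiff_subset)) (by
          have : (t+1) * s = t * s + s := by ring
          omega)
      have hmS := hC hm
      have hmS' : m ∈ S := (mem_sdiff.1 hmS).1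
      -- find an element of Mn below m
      have : ∃ b ∈ Mn, lt b m := by
        have hmn : ¬ ∀ b ∈ S, ¬ lt b m := fun h => (mem_sdiff.1 hmS).2 (mem_filter.2 ⟨hmS', h⟩)
        push Not at hmn
        -- choose b below m with minimal number of predecessors
        let B := S.filter (fun b => lt b m)
        have hB : B.Nonempty := by
          obtain ⟨b, hb, hbm⟩ := hmn
          exact ⟨b, mem_filter.2 ⟨hb, hbm⟩⟩
        obtain ⟨b, hb, hbmin⟩ := exists_min_image B (fun b => (S.filter (fun a => lt a b)).card) hB
        refine ⟨b, mem_filter.2 ⟨(mem_filter.1 hb).1, ?_⟩, (mem_filter.1 hb).2⟩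
        intro a ha hab
        have h1 := hbmin a (mem_filter.2 ⟨ha, htr _ _ _ hab (mem_filter.1 hb).2⟩)
        have h2 : (S.filter (fun c => lt c a)) ⊂ (S.filter (fun c => lt c b)) := by
          refine (ssubset_iff_of_subset ?_).2 ⟨a, mem_filter.2 ⟨ha, hab⟩, ?_⟩
          · intro c hc
            exact mem_filter.2 ⟨(mem_filter.1 hc).1, htr _ _ _ (mem_filter.1 hc).2 hab⟩
          · intro h; exact hirr a (mem_filter.1 h).2
        exact absurd (card_lt_card h2) (by omega)
      obtain ⟨b, hb, hbm⟩ := this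
      have hbC : b ∉ C := fun h => (mem_sdiff.1 (hC h)).2 hb
      have hbl : ∀ c ∈ C, lt b c := by
        intro c hc
        by_cases h : c = m
        · rw [h]; exact hbm
        · exact htr _ _ _ hbm (hmin c hc h)
      refine ⟨insert b C, ?_, ?_, ?_, b, by simp, ?_⟩
      · intro c hc
        rcases mem_insert.1 hc with rfl | h
        · exact (mem_filter.1 hb).1
        · exact (mem_sdiff.1 (hC h)).1
      · rw [card_insert_of_notMem hbC, hCc]
      · intro a ha c hc hne
        rcases mem_insert.1 ha with rfl | ha'
        · rcases mem_insert.1 hc with rfl | hc'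
          · exact absurd rfl hne
          · exact Or.inl (hbl c hc')
        · rcases mem_insert.1 hc with rfl | hc'
          · exact Or.inr (hbl a ha')
          · exact hch a ha' c hc' hne
      · intro c hc hne
        rcases mem_insert.1 hc with rfl | hc
        · exact absurd rfl hne
        · exact hbl c hc
  intro t S h1 h2
  obtain ⟨C, a, b, c, _⟩ := key t S h1 h2
  exact ⟨C, a, b, c⟩

/-- If all chains have size at most `t` there is a large antichain. -/
theorem mirsky' {α : Type*} [DecidableEq α] (lt : α → α → Prop)
    (htr : ∀ a b c, lt a b → lt b c → lt a c) (hirr : ∀ a, ¬ lt a a) (t : ℕ) (S : Finset α)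
    (hS : ∀ C ⊆ S, (∀ a ∈ C, ∀ b ∈ C, a ≠ b → lt a b ∨ lt b a) → C.card ≤ t) :
    ∃ A ⊆ S, (∀ a ∈ A, ∀ b ∈ A, a ≠ b → ¬ lt a b) ∧ S.card ≤ t * A.card := by
  classical
  let F := S.powerset.filter (fun A => ∀ a ∈ A, ∀ b ∈ A, a ≠ b → ¬ lt a b)
  obtain ⟨A, hA, hmax⟩ := exists_max_image F card ⟨∅, by simp [F]⟩
  simp only [F, mem_filter, mem_powerset] at hA hmax
  refine ⟨A, hA.1, hA.2, ?_⟩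
  by_contra hlt
  push Not at hlt
  obtain ⟨C, hC, hc, hch⟩ := mirsky lt htr hirr A.card t S
    (fun B hB h => hmax B ⟨hB, h⟩) hlt
  have := hS C hC hch
  omega

/-- Erdős–Szekeres for two functions. -/
theorem es_two {V : Finset ℕ} (f g : ℕ → ℕ) (hf : Set.InjOn f V) (hg : Set.InjOn g V)
    (r s : ℕ) (h : r * s < V.card) :
    (∃ S ⊆ V, S.card = r + 1 ∧ ∀ a ∈ S, ∀ b ∈ S, (f a < f b ↔ g a < g b)) ∨
    (∃ S ⊆ V, S.card = s + 1 ∧ ∀ a ∈ S, ∀ b ∈ S, (f a < f b ↔ g b < g a)) := by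
  classical
  by_cases hA : ∀ A ⊆ V, (∀ a ∈ A, ∀ b ∈ A, a ≠ b → ¬ (f a < f b ∧ g a < g b)) → A.card ≤ s
  · left
    obtain ⟨C, hC, hc, hch⟩ := mirsky (fun a b => f a < f b ∧ g a < g b)
      (fun a b c h1 h2 => ⟨h1.1.trans h2.1, h1.2.trans h2.2⟩) (fun a h => lt_irrefl _ h.1) s r V hA h
    refine ⟨C, hC, hc, fun a ha b hb => ?_⟩
    by_cases hab : a = b
    · subst hab; simp
    · have := hch a ha b hb hab
      omega
  · right
    push Not at hA
    obtain ⟨A, hAV, hAc, hlt⟩ := hA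
    obtain ⟨S, hS, hSc⟩ := exists_subset_card_eq (show s + 1 ≤ A.card by omega)
    refine ⟨S, hS.trans hAV, hSc, fun a ha b hb => ?_⟩
    by_cases hab : a = b
    · subst hab; simp
    · have h1 := hAc a (hS ha) b (hS hb) hab
      have h2 := hAc b (hS hb) a (hS ha) (Ne.symm hab)
      have h3 : f a ≠ f b := fun h => hab (hf (hAV (hS ha)) (hAV (hS hb)) h)
      have h4 : g a ≠ g b := fun h => hab (hg (hAV (hS ha)) (hAV (hS hb)) h)
      omega

theorem es_three {V : Finset ℕ} (f g k : ℕ → ℕ) (hf : Set.InjOn f V) (hg : Set.InjOn g V)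
    (hk : Set.InjOn k V) (s : ℕ) (h : s ^ 3 < V.card) :
    ∃ S ⊆ V, S.card = s + 1 ∧ ((∀ a ∈ S, ∀ b ∈ S, (f a < f b ↔ g a < g b)) ∨
      (∀ a ∈ S, ∀ b ∈ S, (f a < f b ↔ k a < k b)) ∨
      (∀ a ∈ S, ∀ b ∈ S, (g a < g b ↔ k a < k b))) := by
  rcases es_two f g hf hg s (s*s) (by calc s * (s*s) = s^3 := by ring
                                       _ < _ := h) with ⟨S, h1, h2, h3⟩ | ⟨S, h1, h2, h3⟩
  · exact ⟨S, h1, h2, Or.inl h3⟩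
  · have hS : (S : Set ℕ) ⊆ V := by exact_mod_cast h1
    rcases es_two f k (hf.mono hS) (hk.mono hS) s s (by omega) with ⟨S', h1', h2', h3'⟩ | ⟨S', h1', h2', h3'⟩
    · exact ⟨S', h1'.trans h1, h2', Or.inr (Or.inl h3')⟩
    · refine ⟨S', h1'.trans h1, h2', Or.inr (Or.inr ?_)⟩
      intro a ha b hb
      rw [← h3 b (h1' hb) a (h1' ha), h3' b hb a ha]


def wcnt (F : ℕ → ℕ) (a b l : ℕ) : ℕ := ((Ico a b).filter (fun p => F p = l)).card

/-- Letters `U` realized as twins in positions `[a,b)`. -/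
def WReal (F : ℕ → ℕ) (a b : ℕ) (U : Finset ℕ) : Prop :=
  ∃ p q : ℕ → ℕ, (∀ l ∈ U, a ≤ p l ∧ p l < b ∧ a ≤ q l ∧ q l < b ∧ F (p l) = l ∧ F (q l) = l ∧
    p l ≠ q l) ∧ ∀ l ∈ U, ∀ l' ∈ U, (p l < p l' ↔ q l < q l')

theorem WReal.union {F : ℕ → ℕ} {a b c : ℕ} {U V : Finset ℕ} (hab : a ≤ b) (hbc : b ≤ c)
    (h1 : WReal F a b U) (h2 : WReal F b c V) : WReal F a c (U ∪ V) := by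
  classical
  obtain ⟨p, q, h, ho⟩ := h1
  obtain ⟨p', q', h', ho'⟩ := h2
  refine ⟨fun l => if l ∈ U then p l else p' l, fun l => if l ∈ U then q l else q' l, ?_, ?_⟩
  · intro l hl
    by_cases hU : l ∈ U
    · have := h l hU
      simp only [hU, if_true]; refine ⟨?_, ?_, ?_, ?_, ?_⟩ <;> omega
    · have := h' l ((mem_union.1 hl).resolve_left hU)
      simp only [hU, if_false]; refine ⟨?_, ?_, ?_, ?_, ?_⟩ <;> omega
  · intro l hl l' hl'
    by_cases hU : l ∈ U <;> by_cases hU' : l' ∈ U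
    · simp only [hU, hU', if_true]; exact ho l hU l' hU'
    · have e1 := h l hU
      have e2 := h' l' ((mem_union.1 hl').resolve_left hU')
      simp only [hU, hU', if_true, if_false]; omega
    · have e1 := h l' hU'
      have e2 := h' l ((mem_union.1 hl).resolve_left hU)
      simp only [hU, hU', if_true, if_false]; omega
    · simp only [hU, hU', if_false]
      exact ho' l ((mem_union.1 hl).resolve_left hU) l' ((mem_union.1 hl').resolve_left hU')

theorem wreal_of_triple {F : ℕ → ℕ} {a b : ℕ} (V : Finset ℕ) (hV : ∀ l ∈ V, 3 ≤ wcnt F a b l)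
    (s : ℕ) (h : s ^ 3 < V.card) : ∃ U ⊆ V, U.card = s + 1 ∧ WReal F a b U := by
  classical
  have : ∀ l, ∃ x y z : ℕ, l ∈ V → (x ≠ y ∧ x ≠ z ∧ y ≠ z ∧ (a ≤ x ∧ x < b ∧ F x = l) ∧
      (a ≤ y ∧ y < b ∧ F y = l) ∧ (a ≤ z ∧ z < b ∧ F z = l)) := by
    intro l
    by_cases hl : l ∈ V
    · obtain ⟨x, hx, y, hy, z, hz, h1, h2, h3⟩ := two_lt_card.1 (hV l hl)
      simp only [mem_filter, mem_Ico] at hx hy hz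
      exact ⟨x, y, z, fun _ => ⟨h1, h2, h3, by tauto, by tauto, by tauto⟩⟩
    · exact ⟨0, 0, 0, fun h => absurd h hl⟩
  choose x y z hxyz using this
  have hx : Set.InjOn x V := fun l hl l' hl' he => by
    rw [← (hxyz l hl).2.2.2.1.2.2, ← (hxyz l' hl').2.2.2.1.2.2, he]
  have hy : Set.InjOn y V := fun l hl l' hl' he => by
    rw [← (hxyz l hl).2.2.2.2.1.2.2, ← (hxyz l' hl').2.2.2.2.1.2.2, he]
  have hz : Set.InjOn z V := fun l hl l' hl' he => by
    rw [← (hxyz l hl).2.2.2.2.2.2.2, ← (hxyz l' hl').2.2.2.2.2.2.2, he]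
  obtain ⟨S, hS, hc, h⟩ := es_three x y z hx hy hz s h
  refine ⟨S, hS, hc, ?_⟩
  rcases h with h | h | h
  · exact ⟨x, y, fun l hl => by have := hxyz l (hS hl); tauto, h⟩
  · exact ⟨x, z, fun l hl => by have := hxyz l (hS hl); tauto, h⟩
  · exact ⟨y, z, fun l hl => by have := hxyz l (hS hl); tauto, h⟩

theorem wcnt_add (F : ℕ → ℕ) {a b c : ℕ} (hab : a ≤ b) (hbc : b ≤ c) (l : ℕ) :
    wcnt F a c l = wcnt F a b l + wcnt F b c l := by
  unfold wcnt
  rw [← Ico_union_Ico_eq_Ico hab hbc, filter_union, card_union_of_disjoint]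
  exact disjoint_filter_filter (Ico_disjoint_Ico_consecutive a b c)

theorem wcnt_mul (F : ℕ → ℕ) (a B j l : ℕ) :
    wcnt F a (a + j * B) l = ∑ t ∈ range j, wcnt F (a + t * B) (a + t * B + B) l := by
  induction j with
  | zero => simp [wcnt]
  | succ j ih =>
    rw [sum_range_succ, ← ih, ← wcnt_add]
    · congr 1; ring
    · omega
    · omega

theorem sum_wcnt_le (F : ℕ → ℕ) (a b : ℕ) (A : Finset ℕ) : ∑ l ∈ A, wcnt F a b l ≤ b - a := by
  unfold wcnt
  rw [← Nat.card_Ico a b, ← card_biUnion]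
  · apply card_le_card
    intro p hp
    simp only [mem_biUnion, mem_filter] at hp
    obtain ⟨_, _, h, _⟩ := hp
    exact h
  · intro l _ l' _ hne
    rw [Function.onFun, Finset.disjoint_left]
    intro p hp hp'
    exact hne ((mem_filter.1 hp).2.symm.trans (mem_filter.1 hp').2)

theorem wmerge (F : ℕ → ℕ) (B K : ℕ)
    (H : ∀ a A, ∃ U ⊆ A, WReal F a (a + B) U ∧
      ∑ l ∈ A \ U, wcnt F a (a + B) l / 3 ≤ K * U.card) (j : ℕ) :
    ∀ a A, ∃ U ⊆ A, WReal F a (a + j * B) U ∧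
      ∑ t ∈ range j, ∑ l ∈ A \ U, wcnt F (a + t * B) (a + t * B + B) l / 3 ≤ K * U.card := by
  classical
  intro a A
  induction j with
  | zero => exact ⟨∅, by simp, ⟨id, id, by simp, by simp⟩, by simp⟩
  | succ j ih =>
    obtain ⟨U, hU, hr, hs⟩ := ih
    obtain ⟨V, hV, hr', hs'⟩ := H (a + j * B) (A \ U)
    have hd : Disjoint U V := disjoint_of_subset_right hV disjoint_sdiff
    refine ⟨U ∪ V, union_subset hU (hV.trans sdiff_subset), ?_, ?_⟩
    · have := hr.union (by omega) (by omega) hr'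
      have e : a + (j+1) * B = a + j * B + B := by ring
      rwa [e]
    · rw [sum_range_succ, card_union_of_disjoint hd, mul_add]
      apply add_le_add
      · refine le_trans (sum_le_sum fun t _ => ?_) hs
        exact sum_le_sum_of_subset (sdiff_subset_sdiff le_rfl subset_union_left)
      · refine le_trans ?_ hs'
        apply le_of_eq
        congr 1
        ext l
        simp only [mem_sdiff, mem_union]
        tauto

theorem wmain (F : ℕ → ℕ) (h : ℕ) (hF : ∀ a b l, wcnt F a b l ≤ h) (i : ℕ) :
    ∀ a A, ∃ U ⊆ A, WReal F a (a + 8 ^ i) U ∧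
      ∑ l ∈ A \ U, wcnt F a (a + 8 ^ i) l / 3 ≤ (16 * 4 ^ i + 2 * h) * U.card := by
  classical
  induction i with
  | zero =>
    intro a A
    refine ⟨∅, by simp, ⟨id, id, by simp, by simp⟩, ?_⟩
    simp only [pow_zero, card_empty, mul_zero, nonpos_iff_eq_zero]
    apply sum_eq_zero
    intro l _
    have : wcnt F a (a+1) l ≤ 1 := by
      have := sum_wcnt_le F a (a+1) {l}
      simpa using this
    omega
  | succ i ih =>
    intro a A
    obtain ⟨U, hU, hr, hs⟩ := wmerge F (8 ^ i) _ ih 8 a A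
    have e8 : 8 * 8 ^ i = 8 ^ (i+1) := by ring
    rw [e8] at hr
    let V := (A \ U).filter (fun l => 3 ≤ wcnt F a (a + 8 ^ (i+1)) l)
    have hsum : ∑ l ∈ A \ U, wcnt F a (a + 8 ^ (i+1)) l / 3 ≤
        (16 * 4 ^ i + 2 * h) * U.card + 6 * V.card := by
      calc _ ≤ ∑ l ∈ A \ U, (∑ t ∈ range 8, wcnt F (a + t * 8 ^ i) (a + t * 8 ^ i + 8 ^ i) l / 3 +
            6 * (if 3 ≤ wcnt F a (a + 8 ^ (i+1)) l then 1 else 0)) := by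
            apply sum_le_sum
            intro l _
            have e := wcnt_mul F a (8^i) 8 l
            rw [e8] at e
            simp only [sum_range_succ, sum_range_zero, zero_add] at e ⊢
            split_ifs <;> omega
        _ ≤ _ := by
            rw [sum_add_distrib, sum_comm, ← mul_sum, ← card_filter]
            exact Nat.add_le_add_right hs _
    rcases Nat.eq_zero_or_pos V.card with h0 | h0
    · refine ⟨U, hU, hr, hsum.trans ?_⟩
      rw [h0]
      have : 4 ^ i ≤ 4 ^ (i+1) := Nat.pow_le_pow_right (by norm_num) (by omega)
      simp only [mul_zero, add_zero]
      gcongr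
    · have hex : ∃ s, V.card ≤ s ^ 3 := ⟨V.card, Nat.le_self_pow (by norm_num) _⟩
      have hfs := Nat.find_spec hex
      have hmin := fun m => Nat.find_min hex (m := m)
      have hfle := fun m => Nat.find_min' hex (m := m)
      generalize Nat.find hex = s at hfs hmin hfle
      obtain ⟨s, rfl⟩ : ∃ s', s = s' + 1 := by
        refine ⟨s - 1, ?_⟩
        rcases Nat.eq_zero_or_pos s with rfl | h
        · simp at hfs; simp [hfs] at h0
        · omega
      have hVle : V.card ≤ 8 ^ (i+1) := by
        calc V.card = ∑ l ∈ V, 1 := by simp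
          _ ≤ ∑ l ∈ V, wcnt F a (a + 8 ^ (i+1)) l :=
            sum_le_sum fun l hl => by have := (mem_filter.1 hl).2; omega
          _ ≤ _ := by
            have := sum_wcnt_le F a (a + 8 ^ (i+1)) V
            omega
      have hs2 : s + 1 ≤ 2 ^ (i+1) := by
        apply hfle
        calc V.card ≤ 8 ^ (i+1) := hVle
          _ = (2 ^ (i+1)) ^ 3 := by rw [← pow_mul, mul_comm, pow_mul]; norm_num
      have hV4 : V.card ≤ (s+1) * 4 ^ (i+1) := by
        calc V.card ≤ (s+1)^3 := hfs
          _ = (s+1) * (s+1)^2 := by ring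
          _ ≤ (s+1) * (2^(i+1))^2 := by gcongr
          _ = _ := by rw [← pow_mul, mul_comm (i+1), pow_mul]; norm_num
      obtain ⟨U', hU', hc', hr'⟩ := wreal_of_triple (F := F) (a := a) (b := a + 8 ^ (i+1)) V
        (fun l hl => (mem_filter.1 hl).2) s (not_le.1 (hmin s (by omega)))
      have e4 : (4:ℕ) ^ (i+1) = 4 * 4 ^ i := by ring
      by_cases hcase : 2 * U.card ≤ s + 1
      · refine ⟨U', (hU'.trans (filter_subset _ _)).trans sdiff_subset, hr', ?_⟩
        have h1 : ∑ l ∈ A \ U', wcnt F a (a + 8 ^ (i+1)) l / 3 ≤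
            ∑ l ∈ A \ U, wcnt F a (a + 8 ^ (i+1)) l / 3 + ∑ l ∈ U, wcnt F a (a + 8 ^ (i+1)) l / 3 := by
          rw [sum_sdiff hU]
          exact sum_le_sum_of_subset sdiff_subset
        have h2 : ∑ l ∈ U, wcnt F a (a + 8 ^ (i+1)) l / 3 ≤ U.card * h := by
          rw [← smul_eq_mul]
          apply sum_le_card_nsmul
          intro l _
          have := hF a (a + 8 ^ (i+1)) l
          omega
        rw [hc']
        have h3 : (16 * 4 ^ i + 3 * h) * (2 * U.card) ≤ (16 * 4 ^ i + 3 * h) * (s+1) := by gcongr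
        rw [e4] at hV4 ⊢
        have h5 : 0 ≤ 4 ^ i * (s+1) := Nat.zero_le _
        have h6 : 0 ≤ h * (s+1) := Nat.zero_le _
        nlinarith
      · refine ⟨U, hU, hr, hsum.trans ?_⟩
        have h3 : 4 ^ i * (s+1) ≤ 4 ^ i * (2 * U.card) := by gcongr; omega
        rw [e4] at hV4 ⊢
        nlinarith

theorem perm_word (π : ℕ → ℕ) (hπ : Function.Injective π) (m : ℕ) (hm : 2 ≤ m)
    (hmap : ∀ p < m, π p < m) :
    ∃ (ι : Type) (_ : Fintype ι) (a b : ι → ℕ), m ^ 3 ≤ 8000 ^ 5 * 32 ^ 3 * (Fintype.card ι) ^ 5 ∧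
      (∀ i, a i < m ∧ b i < m) ∧ (∀ i j, a i ≠ b j) ∧ Function.Injective a ∧
      (∀ i j, a i < a j ↔ b i < b j) ∧ (∀ i j, π (a i) < π (a j) ↔ π (b i) < π (b j)) := by
  classical
  by_cases hm32 : m < 32
  · refine ⟨Unit, inferInstance, fun _ => 0, fun _ => 1, ?_, ?_, ?_, ?_, ?_, ?_⟩
    · simp only [Fintype.card_unit, one_pow, mul_one]
      calc m ^ 3 ≤ 32 ^ 3 := by gcongr
        _ ≤ _ := by norm_num
    · intro _; exact ⟨by show 0 < m; omega, by show 1 < m; omega⟩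
    · intro _ _; exact zero_ne_one
    · intro _ _ _; rfl
    · simp
    · simp
  push Not at hm32
  obtain ⟨i, hi1, hi2, hi3⟩ : ∃ i, 1 ≤ i ∧ 32 ^ i ≤ m ∧ m < 32 * 32 ^ i := by
    refine ⟨Nat.log 32 m, ?_, Nat.pow_log_le_self 32 (by omega), ?_⟩
    · exact (Nat.le_log_iff_pow_le (by norm_num) (by omega)).2 (by simpa using hm32)
    · have := Nat.lt_pow_succ_log_self (b := 32) (by norm_num) m
      rwa [pow_succ, mul_comm] at this
  have e32 : (32:ℕ) ^ i = 8 ^ i * 4 ^ i := by rw [← mul_pow]; norm_num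
  have h8 : 8 ≤ 8 ^ i := Nat.le_self_pow (by omega) 8
  have h4 : 0 < 4 ^ i := by positivity
  generalize hW : 8 ^ i = W at *
  generalize hQ : 4 ^ i = Q at *
  set h := 256 * Q with hh
  have hpos : 0 < h := by omega
  let F : ℕ → ℕ := fun p => π p / h
  have hF : ∀ a b l, wcnt F a b l ≤ h := by
    intro a b l
    unfold wcnt
    have : ((Ico a b).filter (fun p => F p = l)).card ≤ (Ico (l * h) (l * h + h)).card := by
      apply card_le_card_of_injOn π
      · intro p hp
        simp only [coe_filter, Set.mem_ofPred_eq, F] at hp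
        have := hp.2
        rw [Nat.div_eq_iff hpos] at this
        simp only [coe_Ico, Set.mem_Ico]
        omega
      · exact hπ.injOn
    simpa using this
  have H := wmain F h hF i
  rw [hW, hQ] at H
  obtain ⟨U, hU, ⟨p, q, hpq, ho⟩, hs⟩ := wmerge F W _ H (m / W) 0 (range (m / h + 1))
  set j := m / W with hj
  have hjm : j * W ≤ m := Nat.div_mul_le_self _ _
  have hjm2 : m < 2 * (j * W) := by
    have h1 : m < (j + 1) * W := by
      rw [hj]
      have := Nat.div_add_mod m W
      have := Nat.mod_lt m (show 0 < W by omega)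
      nlinarith
    have h2 : W ≤ m := by nlinarith
    have h3 : 1 ≤ j := (Nat.one_le_div_iff (by omega)).2 h2
    nlinarith
  simp only [zero_add] at hs hpq
  -- mass count
  have hmass : j * W = ∑ l ∈ range (m / h + 1), wcnt F 0 (j * W) l := by
    have := card_eq_sum_card_fiberwise (f := F) (s := Ico 0 (j * W)) (t := range (m / h + 1)) (by
      intro p hp
      simp only [coe_Ico, Set.mem_Ico] at hp
      simp only [coe_range, Set.mem_Iio, F]
      have := Nat.div_le_div_right (c := h) (hmap p (by omega)).le
      omega)
    simpa [wcnt] using this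
  have hk : 4 * (m / h + 1) ≤ W := by
    have : m / h ≤ W / 8 := by
      rw [Nat.le_div_iff_mul_le (by norm_num)]
      have h1 := Nat.div_mul_le_self m h
      by_contra hcon
      push Not at hcon
      have : W * 32 * Q < (m / h * 8) * 32 * Q := by
        apply Nat.mul_lt_mul_of_pos_right _ h4
        omega
      nlinarith
    omega
  have hsd : ∑ l ∈ range (m / h + 1) \ U, wcnt F 0 (j * W) l ≤
      3 * ((16 * Q + 2 * h) * U.card) + 2 * (j * (m / h + 1)) := by
    calc _ = ∑ l ∈ range (m / h + 1) \ U, ∑ t ∈ range j, wcnt F (t * W) (t * W + W) l := by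
          apply sum_congr rfl
          intro l _
          have := wcnt_mul F 0 W j l
          simpa using this
      _ = ∑ t ∈ range j, ∑ l ∈ range (m / h + 1) \ U, wcnt F (t * W) (t * W + W) l := sum_comm
      _ ≤ ∑ t ∈ range j, ∑ l ∈ range (m / h + 1) \ U, (3 * (wcnt F (t * W) (t * W + W) l / 3) + 2) := by
          refine sum_le_sum fun t _ => sum_le_sum fun l _ => ?_
          omega
      _ = 3 * ∑ t ∈ range j, ∑ l ∈ range (m / h + 1) \ U, (wcnt F (t * W) (t * W + W) l / 3) +
            2 * (j * (range (m / h + 1) \ U).card) := by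
          simp only [sum_add_distrib, mul_sum, sum_const, card_range, smul_eq_mul]
          ring
      _ ≤ _ := by
          gcongr
          calc _ ≤ (range (m / h + 1)).card := card_le_card sdiff_subset
            _ = _ := card_range _
  have hUm : ∑ l ∈ U, wcnt F 0 (j * W) l ≤ U.card * h := by
    rw [← smul_eq_mul]
    exact sum_le_card_nsmul _ _ _ fun l _ => hF _ _ l
  have htot := sum_sdiff hU (f := fun l => wcnt F 0 (j * W) l)
  have hfin : m ≤ 8000 * Q * U.card := by
    have h1 : 4 * (j * (m / h + 1)) ≤ j * W := by nlinarith
    have h2 : j * W ≤ 2 * (3 * ((16 * Q + 2 * h) * U.card) + U.card * h) := by omega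
    have h3 : 3 * ((16 * Q + 2 * h) * U.card) + U.card * h = 1840 * (Q * U.card) := by
      rw [hh]; ring
    have h4 : 8000 * Q * U.card = 8000 * (Q * U.card) := by ring
    omega
  have hfin2 : W ≤ 8000 * U.card := by
    have : W * Q ≤ (8000 * U.card) * Q := by rw [← e32]; nlinarith
    exact Nat.le_of_mul_le_mul_right this h4
  refine ⟨U, inferInstance, fun l => p l, fun l => q l, ?_, ?_, ?_, ?_, ?_, ?_⟩
  · rw [Fintype.card_coe]
    have hWQ : (W * Q) ^ 3 = W ^ 5 := by
      rw [← hW, ← hQ, ← mul_pow, ← pow_mul, ← pow_mul, mul_comm i, mul_comm i, pow_mul, pow_mul]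
      norm_num
    calc m ^ 3 ≤ (32 * 32 ^ i) ^ 3 := by gcongr
      _ = 32 ^ 3 * (W * Q) ^ 3 := by rw [e32]; ring
      _ = 32 ^ 3 * W ^ 5 := by rw [hWQ]
      _ ≤ 32 ^ 3 * (8000 * U.card) ^ 5 := by gcongr
      _ = _ := by ring
  · intro l
    have := hpq l l.2
    exact ⟨by show p l < m; omega, by show q l < m; omega⟩
  · intro l l' he
    have he : p l = q l' := he
    have h1 := hpq l l.2
    have h2 := hpq l' l'.2
    have : (l : ℕ) = l' := by rw [← h1.2.2.2.2.1, ← h2.2.2.2.2.2.1, he]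
    rw [← this] at he
    exact h1.2.2.2.2.2.2 he
  · intro l l' he
    have h1 := hpq l l.2
    have h2 := hpq l' l'.2
    have he' : p l = p l' := he
    apply Subtype.ext
    rw [← h1.2.2.2.2.1, ← h2.2.2.2.2.1, he']
  · intro l l'; exact ho l l.2 l' l'.2
  · intro l l'
    have h1 := hpq l l.2
    have h2 := hpq l' l'.2
    by_cases hll : (l : ℕ) = l'
    · simp [hll]
    · have g : ∀ u v : ℕ, F u ≠ F v → (π u < π v ↔ F u < F v) := by
        intro u v huv
        constructor
        · intro h; exact lt_of_le_of_ne (Nat.div_le_div_right h.le) huv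
        · intro h'; by_contra hc; push Not at hc
          exact absurd (Nat.div_le_div_right (c := h) hc) (not_le.2 h')
      have e1 := h1.2.2.2.2.1
      have e2 := h1.2.2.2.2.2.1
      have e3 := h2.2.2.2.2.1
      have e4 := h2.2.2.2.2.2.1
      rw [g _ _ (by rw [e1, e3]; exact hll), g _ _ (by rw [e2, e4]; exact hll), e1, e2, e3, e4]

theorem exists_rank {α : Type*} (X : Finset α) (f : α → ℕ) :
    ∃ ρ : α → ℕ, (∀ e ∈ X, ρ e < X.card) ∧
      ∀ e ∈ X, ∀ e' ∈ X, (f e < f e' ↔ ρ e < ρ e') := by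
  classical
  have mono : ∀ u v, u ≤ v → (X.filter (fun a => f a < u)) ⊆ (X.filter (fun a => f a < v)) := by
    intro u v huv a ha
    simp only [mem_filter] at ha ⊢
    exact ⟨ha.1, by omega⟩
  refine ⟨fun e => (X.filter (fun a => f a < f e)).card, ?_, ?_⟩
  · intro e he
    apply card_lt_card
    refine (ssubset_iff_of_subset (filter_subset _ _)).2 ⟨e, he, by simp⟩
  · intro e he e' he'
    constructor
    · intro h
      apply card_lt_card
      refine (ssubset_iff_of_subset (mono _ _ h.le)).2 ⟨e, by simp [he, h], by simp⟩
    · intro h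
      by_contra hc
      push Not at hc
      exact absurd (card_le_card (mono _ _ hc)) (not_le.2 h)

theorem perm_twins {α : Type*} (X : Finset α) (f g : α → ℕ) (hf : Set.InjOn f X)
    (hg : Set.InjOn g X) (hX : 2 ≤ X.card) :
    ∃ (ι : Type) (_ : Fintype ι) (a b : ι → α),
      X.card ^ 3 ≤ 8000 ^ 5 * 32 ^ 3 * (Fintype.card ι) ^ 5 ∧
      (∀ i, a i ∈ X ∧ b i ∈ X) ∧ (∀ i j, a i ≠ b j) ∧ Function.Injective a ∧
      (∀ i j, f (a i) < f (a j) ↔ f (b i) < f (b j)) ∧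
      (∀ i j, g (a i) < g (a j) ↔ g (b i) < g (b j)) := by
  classical
  obtain ⟨ρ, hρ, hρo⟩ := exists_rank X f
  obtain ⟨τ, hτ, hτo⟩ := exists_rank X g
  have hρi : Set.InjOn ρ X := by
    intro e he e' he' h
    have h1 := hρo e he e' he'
    have h2 := hρo e' he' e he
    exact hf he he' (by omega)
  have hτi : Set.InjOn τ X := by
    intro e he e' he' h
    have h1 := hτo e he e' he'
    have h2 := hτo e' he' e he
    exact hg he he' (by omega)
  have hsurj : ∀ p, ∃ e, p < X.card → e ∈ X ∧ ρ e = p := by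
    have himg : X.image ρ = range X.card := by
      apply eq_of_subset_of_card_le
      · intro p hp
        obtain ⟨e, he, rfl⟩ := mem_image.1 hp
        exact mem_range.2 (hρ e he)
      · rw [card_range, card_image_of_injOn hρi]
    intro p
    by_cases hp : p < X.card
    · have : p ∈ X.image ρ := by rw [himg]; exact mem_range.2 hp
      obtain ⟨e, he, h⟩ := mem_image.1 this
      exact ⟨e, fun _ => ⟨he, h⟩⟩
    · obtain ⟨e, _⟩ := card_pos.1 (by omega : 0 < X.card)
      exact ⟨e, fun h => absurd h hp⟩
  choose v hv using hsurj
  obtain ⟨ι, hι, a, b, h1, h2, h3, h4, h5, h6⟩ := perm_word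
    (fun p => if p < X.card then τ (v p) else p) (by
      intro p p' h
      by_cases hp : p < X.card <;> by_cases hp' : p' < X.card
      · simp only [hp, hp', if_true] at h
        rw [← (hv p hp).2, ← (hv p' hp').2, hτi (hv p hp).1 (hv p' hp').1 h]
      · simp only [hp, hp', if_true, if_false] at h
        have := hτ _ (hv p hp).1
        omega
      · simp only [hp, hp', if_true, if_false] at h
        have := hτ _ (hv p' hp').1
        omega
      · simpa only [hp, hp', if_false] using h) X.card hX (by
      intro p hp
      simp only [hp, if_true]
      exact hτ _ (hv p hp).1)
  refine ⟨ι, hι, fun i => v (a i), fun i => v (b i), h1, ?_, ?_, ?_, ?_, ?_⟩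
  · intro i; exact ⟨(hv _ (h2 i).1).1, (hv _ (h2 i).2).1⟩
  · intro i j h
    have h : v (a i) = v (b j) := h
    apply h3 i j
    rw [← (hv _ (h2 i).1).2, ← (hv _ (h2 j).2).2, h]
  · intro i j h
    apply h4
    have h : v (a i) = v (a j) := h
    rw [← (hv _ (h2 i).1).2, ← (hv _ (h2 j).1).2, h]
  · intro i j
    rw [hρo _ (hv _ (h2 i).1).1 _ (hv _ (h2 j).1).1, hρo _ (hv _ (h2 i).2).1 _ (hv _ (h2 j).2).1,
      (hv _ (h2 i).1).2, (hv _ (h2 i).2).2, (hv _ (h2 j).1).2, (hv _ (h2 j).2).2]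
    exact h5 i j
  · intro i j
    have := h6 i j
    simp only [(h2 i).1, (h2 i).2, (h2 j).1, (h2 j).2, if_true] at this
    rw [hτo _ (hv _ (h2 i).1).1 _ (hv _ (h2 j).1).1, hτo _ (hv _ (h2 i).2).1 _ (hv _ (h2 j).2).1]
    exact this

/-! ### Edge systems -/

/-- Edges as increasing sequences of `r` vertices, distinct edges being vertex disjoint. -/
def Sys {α : Type*} (r : ℕ) (x : α → ℕ → ℕ) (S : Finset α) : Prop :=
  (∀ e ∈ S, ∀ i j, i < j → j < r → x e i < x e j) ∧
  ∀ e ∈ S, ∀ e' ∈ S, e ≠ e' → ∀ i j, i < r → j < r → x e i ≠ x e' j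

theorem Sys.mono {α : Type*} {r : ℕ} {x : α → ℕ → ℕ} {S S' : Finset α} (h : Sys r x S)
    (hs : S' ⊆ S) : Sys r x S' :=
  ⟨fun e he => h.1 e (hs he), fun e he e' he' => h.2 e (hs he) e' (hs he')⟩

theorem Sys.le {α : Type*} {r : ℕ} {x : α → ℕ → ℕ} {S : Finset α} (h : Sys r x S)
    {e : α} (he : e ∈ S) {i j : ℕ} (hij : i ≤ j) (hj : j < r) : x e i ≤ x e j := by
  rcases hij.lt_or_eq with h' | h'
  · exact (h.1 e he i j h' hj).le
  · rw [h']

theorem Sys.lt_iff {α : Type*} {r : ℕ} {x : α → ℕ → ℕ} {S : Finset α} (h : Sys r x S)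
    {e : α} (he : e ∈ S) {i j : ℕ} (hi : i < r) (hj : j < r) : x e i < x e j ↔ i < j := by
  constructor
  · intro h'
    by_contra hc
    push Not at hc
    have := h.le he hc hi
    omega
  · intro h'; exact h.1 e he i j h' hj

def TW {α : Type*} (r : ℕ) (x : α → ℕ → ℕ) (S : Finset α) (T : ℕ) : Prop :=
  ∃ (ι : Type) (_ : Fintype ι) (a b : ι → α), Fintype.card ι = T ∧
    (∀ i, a i ∈ S ∧ b i ∈ S) ∧ (∀ i j, a i ≠ b j) ∧ Function.Injective a ∧
    ∀ i j s s', s < r → s' < r → (x (a i) s < x (a j) s' ↔ x (b i) s < x (b j) s')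

theorem TW.mono {α : Type*} {r : ℕ} {x : α → ℕ → ℕ} {S S' : Finset α} {T : ℕ} (h : TW r x S T)
    (hs : S ⊆ S') : TW r x S' T := by
  obtain ⟨ι, hι, a, b, h1, h2, h3⟩ := h
  exact ⟨ι, hι, a, b, h1, fun i => ⟨hs (h2 i).1, hs (h2 i).2⟩, h3⟩

theorem TW.one {α : Type*} {r : ℕ} {x : α → ℕ → ℕ} {S : Finset α} (hS : Sys r x S)
    (h : 2 ≤ S.card) : TW r x S 1 := by
  obtain ⟨e, he, e', he', hne⟩ := one_lt_card.1 h
  refine ⟨Unit, inferInstance, fun _ => e, fun _ => e', by simp, fun _ => ⟨he, he'⟩,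
    fun _ _ => hne, fun _ _ _ => rfl, ?_⟩
  intro _ _ s s' hs hs'
  rw [hS.lt_iff he hs hs', hS.lt_iff he' hs hs']

theorem TW.combine {α : Type*} {r : ℕ} {x : α → ℕ → ℕ} {S L R : Finset α} (hS : Sys r x S)
    (hL : L ⊆ S) (hR : R ⊆ S) (hLR : ∀ e ∈ L, e ∉ R) {T T' : ℕ}
    (D : ℕ → ℕ → Prop)
    (hD : ∀ e ∈ L, ∀ e' ∈ R, ∀ s s', s < r → s' < r → (x e s < x e' s' ↔ D s s'))
    (h : TW r x L T) (h' : TW r x R T') : TW r x S (T + T') := by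
  obtain ⟨ι, hι, a, b, h1, h2, h3, h4, h5⟩ := h
  obtain ⟨ι', hι', a', b', h1', h2', h3', h4', h5'⟩ := h'
  have hne : ∀ e ∈ L, ∀ e' ∈ R, e ≠ e' := fun e he e' he' h => hLR e he (h ▸ he')
  have hDr : ∀ e ∈ L, ∀ e' ∈ R, ∀ s s', s < r → s' < r → (x e' s' < x e s ↔ ¬ D s s') := by
    intro e he e' he' s s' hs hs'
    rw [← hD e he e' he' s s' hs hs']
    have := hS.2 e (hL he) e' (hR he') (hne e he e' he') s s' hs hs'
    omega
  refine ⟨ι ⊕ ι', inferInstance, Sum.elim a a', Sum.elim b b', by simp [h1, h1'], ?_, ?_, ?_, ?_⟩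
  · rintro (i | i)
    · exact ⟨hL (h2 i).1, hL (h2 i).2⟩
    · exact ⟨hR (h2' i).1, hR (h2' i).2⟩
  · rintro (i | i) (j | j)
    · exact h3 i j
    · exact hne _ (h2 i).1 _ (h2' j).2
    · exact (hne _ (h2 j).2 _ (h2' i).1).symm
    · exact h3' i j
  · rintro (i | i) (j | j) he
    · exact congrArg _ (h4 he)
    · exact absurd he (hne _ (h2 i).1 _ (h2' j).1)
    · exact absurd he.symm (hne _ (h2 j).1 _ (h2' i).1)
    · exact congrArg _ (h4' he)
  · rintro (i | i) (j | j) s s' hs hs'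
    · exact h5 i j s s' hs hs'
    · simp only [Sum.elim_inl, Sum.elim_inr]
      rw [hD _ (h2 i).1 _ (h2' j).1 s s' hs hs', hD _ (h2 i).2 _ (h2' j).2 s s' hs hs']
    · simp only [Sum.elim_inl, Sum.elim_inr]
      rw [hDr _ (h2 j).1 _ (h2' i).1 s' s hs' hs, hDr _ (h2 j).2 _ (h2' i).2 s' s hs' hs]
    · exact h5' i j s s' hs hs'

def Good {α : Type*} (ρ : ℕ) (x : α → ℕ → ℕ) (S : Finset α) : Prop :=
  (∃ R : ℕ → ℕ → Prop, ∀ e ∈ S, ∀ e' ∈ S, x e 0 < x e' 0 → ∀ i j, i < ρ → j < ρ →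
    (x e i < x e' j ↔ R i j)) ∧
  ∃ i0 < ρ, (∀ i < i0, ∀ e ∈ S, ∀ e' ∈ S, x e i < x e' i0) ∧
    ∀ e ∈ S, ∀ e' ∈ S, e ≠ e' → x e (ρ - 1) < x e' i0 ∨ x e' (ρ - 1) < x e i0

theorem Good.mono {α : Type*} {ρ : ℕ} {x : α → ℕ → ℕ} {S S' : Finset α} (h : Good ρ x S)
    (hs : S' ⊆ S) : Good ρ x S' := by
  obtain ⟨⟨R, hR⟩, i0, hi0, h1, h2⟩ := h
  exact ⟨⟨R, fun e he e' he' => hR e (hs he) e' (hs he')⟩, i0, hi0,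
    fun i hi e he e' he' => h1 i hi e (hs he) e' (hs he'),
    fun e he e' he' => h2 e (hs he) e' (hs he')⟩

theorem good_perm_case {α : Type*} {ρ : ℕ} {x : α → ℕ → ℕ} {X : Finset α} (hρ : 0 < ρ)
    (hS : Sys (ρ + 1) x X) (hG : Good ρ x X) (c : ℕ)
    (hc : ∀ e ∈ X, x e (ρ - 1) < c ∧ c ≤ x e ρ) (h2 : 2 ≤ X.card) :
    ∃ T, TW (ρ + 1) x X T ∧ X.card ^ 3 ≤ 8000 ^ 5 * 32 ^ 3 * T ^ 5 := by
  have inj : ∀ s, s < ρ + 1 → Set.InjOn (fun e => x e s) X := by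
    intro s hs e he e' he' h
    by_contra hne
    exact hS.2 e he e' he' hne s s hs hs h
  obtain ⟨ι, hι, a, b, h1, h2, h3, h4, h5, h6⟩ := perm_twins X (fun e => x e 0) (fun e => x e ρ)
    (inj 0 (by omega)) (inj ρ (by omega)) h2
  obtain ⟨⟨R, hR⟩, -⟩ := hG
  have hlt : ∀ e ∈ X, ∀ s < ρ, x e s < c := by
    intro e he s hs
    have := hS.le he (show s ≤ ρ - 1 by omega) (by omega)
    have := (hc e he).1
    omega
  -- order of `b` edges
  have hcmp : ∀ e ∈ X, ∀ e' ∈ X, ∀ f ∈ X, ∀ f' ∈ X, e ≠ e' → f ≠ f' →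
      (x e 0 < x e' 0 ↔ x f 0 < x f' 0) → ∀ s s', s < ρ → s' < ρ →
      (x e s < x e' s' ↔ x f s < x f' s') := by
    intro e he e' he' f hf f' hf' hne hne' hiff s s' hs hs'
    have g1 := hS.2 e he e' he' hne 0 0 (by omega) (by omega)
    have g2 := hS.2 f hf f' hf' hne' 0 0 (by omega) (by omega)
    by_cases hlt : x e 0 < x e' 0
    · rw [hR e he e' he' hlt s s' hs hs', hR f hf f' hf' (hiff.1 hlt) s s' hs hs']
    · have k1 := hR e' he' e he (by omega) s' s hs' hs
      have k2 := hR f' hf' f hf (by omega) s' s hs' hs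
      have g3 := hS.2 e he e' he' hne s s' (by omega) (by omega)
      have g4 := hS.2 f hf f' hf' hne' s s' (by omega) (by omega)
      have : x e' s' < x e s ↔ x f' s' < x f s := k1.trans k2.symm
      omega
  refine ⟨Fintype.card ι, ⟨ι, hι, a, b, rfl, h2, h3, h4, ?_⟩, h1⟩
  intro i j s s' hs hs'
  by_cases hij : i = j
  · subst hij
    rw [hS.lt_iff (h2 i).1 hs hs', hS.lt_iff (h2 i).2 hs hs']
  have hane : a i ≠ a j := fun h => hij (h4 h)
  have hbne : b i ≠ b j := by
    intro h
    have g1 := hS.2 _ (h2 i).1 _ (h2 j).1 hane 0 0 (by omega) (by omega)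
    have g2 := h5 i j
    have g3 := h5 j i
    simp only [h] at g2 g3
    omega
  rcases Nat.lt_succ_iff_lt_or_eq.1 hs with hs1 | rfl <;>
    rcases Nat.lt_succ_iff_lt_or_eq.1 hs' with hs1' | rfl
  · exact hcmp _ (h2 i).1 _ (h2 j).1 _ (h2 i).2 _ (h2 j).2 hane hbne (h5 i j) s s' hs1 hs1'
  · have k1 := hlt _ (h2 i).1 s hs1
    have k2 := hlt _ (h2 i).2 s hs1
    have k3 := (hc _ (h2 j).1).2
    have k4 := (hc _ (h2 j).2).2
    omega
  · have k1 := hlt _ (h2 j).1 s' hs1'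
    have k2 := hlt _ (h2 j).2 s' hs1'
    have k3 := (hc _ (h2 i).1).2
    have k4 := (hc _ (h2 i).2).2
    omega
  · exact h6 i j

theorem good_twins {α : Type*} {ρ : ℕ} {x : α → ℕ → ℕ} (hρ : 0 < ρ) :
    ∀ (m : ℕ) (S : Finset α), S.card = m → 2 ≤ m → Sys (ρ + 1) x S → Good ρ x S →
    ∃ T, TW (ρ + 1) x S T ∧ m ^ 3 ≤ 64 * (8000 ^ 5 * 32 ^ 3) * T ^ 5 := by
  classical
  intro m
  induction m using Nat.strong_induction_on with
  | _ m ih =>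
  intro S hSm hm hS hG
  by_cases hm30 : m < 30
  · refine ⟨1, TW.one hS (by omega), ?_⟩
    calc m ^ 3 ≤ 30 ^ 3 := by gcongr
      _ ≤ _ := by norm_num
  push Not at hm30
  have hG' := hG
  obtain ⟨⟨R, hR⟩, i0, hi0, hb1, hb2⟩ := hG'
  obtain ⟨c, hc1, hc2⟩ : ∃ c, m ≤ 3 * (S.filter (fun e => x e ρ < c)).card ∧
      3 * (S.filter (fun e => x e ρ < c)).card ≤ m + 3 := by
    have hex : ∃ c, m ≤ 3 * (S.filter (fun e => x e ρ < c)).card := by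
      refine ⟨S.sup (fun e => x e ρ) + 1, ?_⟩
      rw [filter_true_of_mem]
      · omega
      · intro e he
        exact Nat.lt_succ_of_le (le_sup (f := fun e => x e ρ) he)
    refine ⟨Nat.find hex, Nat.find_spec hex, ?_⟩
    rcases Nat.eq_zero_or_pos (Nat.find hex) with h0 | h0
    · rw [h0]; simp
    · have hmin := Nat.find_min hex (m := Nat.find hex - 1) (by omega)
      have hsub : (S.filter (fun e => x e ρ < Nat.find hex)) ⊆
          (S.filter (fun e => x e ρ < Nat.find hex - 1)) ∪
          (S.filter (fun e => x e ρ = Nat.find hex - 1)) := by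
        intro e he
        simp only [mem_union, mem_filter] at he ⊢
        have := he.2
        by_cases h : x e ρ = Nat.find hex - 1
        · exact Or.inr ⟨he.1, h⟩
        · exact Or.inl ⟨he.1, by omega⟩
      have h1 : (S.filter (fun e => x e ρ = Nat.find hex - 1)).card ≤ 1 := by
        rw [card_le_one]
        intro e he e' he'
        by_contra hne
        simp only [mem_filter] at he he'
        exact hS.2 e he.1 e' he'.1 hne ρ ρ (by omega) (by omega) (by rw [he.2, he'.2])
      have h2 := (card_le_card hsub).trans (card_union_le _ _)
      omega
  set L := S.filter (fun e => x e ρ < c) with hLdef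
  set R' := S.filter (fun e => c ≤ x e i0) with hRdef
  set X := S.filter (fun e => x e (ρ - 1) < c ∧ c ≤ x e ρ) with hXdef
  have hL : L ⊆ S := filter_subset _ _
  have hR' : R' ⊆ S := filter_subset _ _
  have hX : X ⊆ S := filter_subset _ _
  have huy : ∀ e ∈ S, x e i0 < x e ρ := fun e he => hS.1 e he i0 ρ hi0 (by omega)
  have huv : ∀ e ∈ S, x e i0 ≤ x e (ρ - 1) := fun e he => hS.le he (by omega) (by omega)
  have hvy : ∀ e ∈ S, x e (ρ - 1) < x e ρ := fun e he => hS.1 e he _ ρ (by omega) (by omega)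
  by_cases hRc : m ≤ 3 * R'.card
  · have hLlt : L.card < m := by omega
    have hLR : ∀ e ∈ L, e ∉ R' := by
      intro e he he'
      simp only [hLdef, hRdef, mem_filter] at he he'
      have := huy e he.1
      omega
    have hRlt : R'.card < m := by
      rw [← hSm]
      obtain ⟨e, he⟩ := card_pos.1 (show 0 < L.card by omega)
      exact card_lt_card ((ssubset_iff_of_subset hR').2 ⟨e, hL he, hLR e he⟩)
    obtain ⟨T1, hT1, hT1'⟩ := ih _ hLlt L rfl (by omega) (hS.mono hL) (hG.mono hL)
    obtain ⟨T2, hT2, hT2'⟩ := ih _ hRlt R' rfl (by omega) (hS.mono hR') (hG.mono hR')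
    refine ⟨T1 + T2, ?_, ?_⟩
    · refine TW.combine hS hL hR' hLR (fun s s' =>
        if s < ρ then (if s' < ρ then (if R (ρ-1) (ρ-1) then R s s' else ¬ R s' s) else True)
        else i0 ≤ s') ?_ hT1 hT2
      intro e he e' he' s s' hs hs'
      have hne : e ≠ e' := fun h => hLR e he (h ▸ he')
      simp only [hLdef, hRdef, mem_filter] at he he'
      have a1 := huy e he.1
      have a2 := huv e he.1
      have a3 := hvy e he.1
      have b1 := huy e' he'.1
      have b2 := huv e' he'.1
      have b3 := hvy e' he'.1
      by_cases hsρ : s < ρ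
      · by_cases hsρ' : s' < ρ
        · simp only [hsρ, hsρ', if_true]
          have g0 := hS.2 e he.1 e' he'.1 hne 0 0 (by omega) (by omega)
          by_cases hlt : x e 0 < x e' 0
          · have := (hR e he.1 e' he'.1 hlt (ρ-1) (ρ-1) (by omega) (by omega)).1 (by omega)
            rw [if_pos this]
            exact hR e he.1 e' he'.1 hlt s s' hsρ hsρ'
          · have := hR e' he'.1 e he.1 (by omega) (ρ-1) (ρ-1) (by omega) (by omega)
            rw [if_neg (by rw [← this]; omega), ← hR e' he'.1 e he.1 (by omega) s' s hsρ' hsρ]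
            have g1 := hS.2 e he.1 e' he'.1 hne s s' hs hs'
            omega
        · simp only [hsρ, hsρ', if_true, if_false, iff_true]
          have : s' = ρ := by omega
          subst this
          have := hS.le he.1 (show s ≤ s' by omega) (by omega)
          omega
      · simp only [hsρ, if_false]
        have : s = ρ := by omega
        subst this
        constructor
        · intro h
          by_contra hcon
          push Not at hcon
          have := hb1 s' hcon e' he'.1 e he.1
          omega
        · intro h
          have := hS.le he'.1 h hs'
          omega
    · -- arithmetic
      set K := 64 * (8000 ^ 5 * 32 ^ 3) with hK
      clear_value K
      rcases le_total T1 T2 with h | h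
      · have : m ^ 3 ≤ 27 * (K * T1 ^ 5) := by
          calc m ^ 3 ≤ (3 * L.card) ^ 3 := by gcongr
            _ = 27 * L.card ^ 3 := by ring
            _ ≤ _ := by gcongr
        calc m ^ 3 ≤ 27 * (K * T1 ^ 5) := this
          _ ≤ 32 * (K * T1 ^ 5) := by gcongr; norm_num
          _ = K * (T1 + T1) ^ 5 := by ring
          _ ≤ _ := by gcongr
      · have : m ^ 3 ≤ 27 * (K * T2 ^ 5) := by
          calc m ^ 3 ≤ (3 * R'.card) ^ 3 := by gcongr
            _ = 27 * R'.card ^ 3 := by ring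
            _ ≤ _ := by gcongr
        calc m ^ 3 ≤ 27 * (K * T2 ^ 5) := this
          _ ≤ 32 * (K * T2 ^ 5) := by gcongr; norm_num
          _ = K * (T2 + T2) ^ 5 := by ring
          _ ≤ _ := by gcongr
  · have hBad : (S.filter (fun e => x e i0 < c ∧ c ≤ x e (ρ - 1))).card ≤ 1 := by
      rw [card_le_one]
      intro e he e' he'
      by_contra hne
      simp only [mem_filter] at he he'
      have := hb2 e he.1 e' he'.1 hne
      omega
    have hcover : S ⊆ ((L ∪ R') ∪ X) ∪ (S.filter (fun e => x e i0 < c ∧ c ≤ x e (ρ - 1))) := by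
      intro e he
      simp only [hLdef, hRdef, hXdef, mem_union, mem_filter, he, true_and]
      omega
    have k1 := card_le_card hcover
    have k2 := card_union_le ((L ∪ R') ∪ X) (S.filter (fun e => x e i0 < c ∧ c ≤ x e (ρ - 1)))
    have k3 := card_union_le (L ∪ R') X
    have k4 := card_union_le L R'
    have hXc : m ≤ 4 * X.card := by omega
    obtain ⟨T, hT, hT'⟩ := good_perm_case hρ (hS.mono hX) (hG.mono hX) c
      (fun e he => (mem_filter.1 he).2) (by omega)
    refine ⟨T, hT.mono hX, ?_⟩
    set K := 8000 ^ 5 * 32 ^ 3 with hK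
    clear_value K
    calc m ^ 3 ≤ (4 * X.card) ^ 3 := by gcongr
      _ = 64 * X.card ^ 3 := by ring
      _ ≤ 64 * (K * T ^ 5) := by gcongr
      _ = _ := by ring

/-! ### Cliques -/

structure Blocks {α : Type*} (ρ : ℕ) (x : α → ℕ → ℕ) (S : Finset α) (β : ℕ → ℕ) (j : ℕ) : Prop where
  mono : ∀ i i', i ≤ i' → i' < ρ → β i ≤ β i'
  lt : ∀ i, i < ρ → β i < j
  surj : ∀ b, b < j → ∃ i < ρ, β i = b
  sep : ∀ e ∈ S, ∀ e' ∈ S, ∀ i i', i < ρ → i' < ρ → β i < β i' → x e i < x e' i'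

theorem Blocks.subset {α : Type*} {ρ : ℕ} {x : α → ℕ → ℕ} {S S' : Finset α} {β : ℕ → ℕ} {j : ℕ}
    (h : Blocks ρ x S β j) (hs : S' ⊆ S) : Blocks ρ x S' β j :=
  ⟨h.mono, h.lt, h.surj, fun e he e' he' => h.sep e (hs he) e' (hs he')⟩

def Below {α : Type*} (ρ : ℕ) (x : α → ℕ → ℕ) (β : ℕ → ℕ) (b : ℕ) (e e' : α) : Prop :=
  ∀ i i', i < ρ → i' < ρ → β i = b → β i' = b → x e i < x e' i'

def SLt {α : Type*} (ρ : ℕ) (x : α → ℕ → ℕ) (β : ℕ → ℕ) (j : ℕ) (E : Finset ℕ) (e e' : α) : Prop :=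
  ∀ b < j, ((b = 0 ∨ b ∈ E) → Below ρ x β b e e') ∧ (¬ (b = 0 ∨ b ∈ E) → Below ρ x β b e' e)

theorem Below.trans {α : Type*} {ρ : ℕ} {x : α → ℕ → ℕ} {β : ℕ → ℕ} {b : ℕ} {e e' e'' : α}
    (hb : ∃ i < ρ, β i = b) (h : Below ρ x β b e e') (h' : Below ρ x β b e' e'') :
    Below ρ x β b e e'' := by
  obtain ⟨k, hk, hkb⟩ := hb
  intro i i' hi hi' hib hib'
  exact (h i k hi hk hib hkb).trans (h' k i' hk hi' hkb hib')

theorem chain_good {α : Type*} {ρ : ℕ} {x : α → ℕ → ℕ} {C : Finset α} {β : ℕ → ℕ} {j : ℕ}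
    (hρ : 0 < ρ) (hj : 0 < j) (hB : Blocks ρ x C β j) (E : Finset ℕ)
    (hC : ∀ e ∈ C, ∀ e' ∈ C, e ≠ e' → SLt ρ x β j E e e' ∨ SLt ρ x β j E e' e) : Good ρ x C := by
  classical
  have hβ0 : β 0 = 0 := by
    obtain ⟨i, hi, hi0⟩ := hB.surj 0 hj
    have := hB.mono 0 i (by omega) hi
    omega
  have hlast : β (ρ - 1) = j - 1 := by
    obtain ⟨i, hi, hi0⟩ := hB.surj (j - 1) (by omega)
    have h1 := hB.mono i (ρ - 1) (by omega) (by omega)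
    have h2 := hB.lt (ρ - 1) (by omega)
    omega
  constructor
  · refine ⟨fun i i' => β i < β i' ∨ (β i = β i' ∧ (β i = 0 ∨ β i ∈ E)), ?_⟩
    intro e he e' he' hlt i i' hi hi'
    have hne : e ≠ e' := by rintro rfl; exact lt_irrefl _ hlt
    have hl : SLt ρ x β j E e e' := by
      rcases hC e he e' he' hne with h | h
      · exact h
      · have := (h 0 hj).1 (Or.inl rfl) 0 0 hρ hρ hβ0 hβ0
        omega
    have hbl := hl (β i) (hB.lt i hi)
    rcases lt_trichotomy (β i) (β i') with h | h | h
    · have := hB.sep e he e' he' i i' hi hi' h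
      simp [this, h]
    · by_cases hE : β i = 0 ∨ β i ∈ E
      · have := hbl.1 hE i i' hi hi' rfl h.symm
        simp only [this, true_iff]
        exact Or.inr ⟨h, hE⟩
      · have := hbl.2 hE i' i hi' hi h.symm rfl
        constructor
        · intro h'; omega
        · rintro (h' | h')
          · omega
          · exact absurd h'.2 hE
    · have := hB.sep e' he' e he i' i hi' hi h
      constructor
      · intro h'; omega
      · rintro (h' | h') <;> omega
  · have hex : ∃ i, i < ρ ∧ β i = j - 1 := ⟨ρ - 1, by omega, hlast⟩
    obtain ⟨hf1, hf2⟩ := Nat.find_spec hex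
    refine ⟨Nat.find hex, hf1, ?_, ?_⟩
    · intro i hi e he e' he'
      have h1 := Nat.find_min hex hi
      have h2 := hB.mono i _ hi.le hf1
      apply hB.sep e he e' he' i _ (by omega) hf1
      rcases lt_or_eq_of_le h2 with h | h
      · exact h
      · exact absurd ⟨by omega, by omega⟩ h1
    · intro e he e' he' hne
      have key : ∀ e e', SLt ρ x β j E e e' →
          x e (ρ - 1) < x e' (Nat.find hex) ∨ x e' (ρ - 1) < x e (Nat.find hex) := by
        intro e e' h
        have := h (j - 1) (by omega)
        by_cases hE : j - 1 = 0 ∨ j - 1 ∈ E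
        · exact Or.inl (this.1 hE _ _ (by omega) hf1 hlast hf2)
        · exact Or.inr (this.2 hE _ _ (by omega) hf1 hlast hf2)
      rcases hC e he e' he' hne with h | h
      · exact key e e' h
      · exact (key e' e h).symm

theorem multi_mirsky {α ι : Type*} [DecidableEq α] (lt : ι → α → α → Prop) (I : Finset ι)
    (htr : ∀ i ∈ I, ∀ a b c, lt i a b → lt i b c → lt i a c) (hirr : ∀ i ∈ I, ∀ a, ¬ lt i a a)
    (t : ℕ) (S : Finset α)
    (hS : ∀ i ∈ I, ∀ C ⊆ S, (∀ a ∈ C, ∀ b ∈ C, a ≠ b → lt i a b ∨ lt i b a) → C.card ≤ t) :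
    ∃ A ⊆ S, (∀ i ∈ I, ∀ a ∈ A, ∀ b ∈ A, a ≠ b → ¬ lt i a b) ∧ S.card ≤ t ^ I.card * A.card := by
  classical
  induction I using Finset.induction_on with
  | empty => exact ⟨S, le_rfl, by simp, by simp⟩
  | insert i I hi ih =>
    obtain ⟨A, hA, hanti, hcard⟩ := ih (fun k hk => htr k (mem_insert_of_mem hk))
      (fun k hk => hirr k (mem_insert_of_mem hk)) (fun k hk => hS k (mem_insert_of_mem hk))
    obtain ⟨A', hA', hanti', hcard'⟩ := mirsky' (lt i) (htr i (mem_insert_self _ _))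
      (hirr i (mem_insert_self _ _)) t A
      (fun C hC => hS i (mem_insert_self _ _) C (hC.trans hA))
    refine ⟨A', hA'.trans hA, ?_, ?_⟩
    · intro k hk a ha b hb
      rcases mem_insert.1 hk with rfl | hk
      · exact hanti' a ha b hb
      · exact hanti k hk a (hA' ha) b (hA' hb)
    · rw [card_insert_of_notMem hi]
      calc S.card ≤ t ^ I.card * A.card := hcard
        _ ≤ t ^ I.card * (t * A'.card) := by gcongr
        _ = _ := by ring

def Cut {α : Type*} (ρ : ℕ) (x : α → ℕ → ℕ) (β : ℕ → ℕ) (e e' : α) (s f : ℕ) : Prop :=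
  s + 1 < ρ ∧ f < ρ ∧ β s = β (s + 1) ∧ x e s < x e' f ∧ x e' f < x e (s + 1)

theorem exists_cut_one {α : Type*} {ρ : ℕ} {x : α → ℕ → ℕ} {S : Finset α} {β : ℕ → ℕ} {j : ℕ}
    (hB : Blocks ρ x S β j) (hS : Sys ρ x S) {e e' : α}
    (he : e ∈ S) (he' : e' ∈ S) (hne : e ≠ e') {f i : ℕ} (hf : f < ρ) (hi : i < ρ)
    (hfi : β f = β i) (h1 : x e f < x e' f) (h2 : x e' f < x e i) :
    ∃ s, Cut ρ x β e e' s f := by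
  have hex : ∃ k, k < ρ ∧ x e' f < x e k := ⟨i, hi, h2⟩
  obtain ⟨hk1, hk2⟩ := Nat.find_spec hex
  have hki : Nat.find hex ≤ i := Nat.find_min' hex ⟨hi, h2⟩
  have hfk : f < Nat.find hex := by
    by_contra hc
    push Not at hc
    have := hS.le he hc hf
    omega
  have hmin := Nat.find_min hex (m := Nat.find hex - 1) (by omega)
  generalize Nat.find hex = k at *
  refine ⟨k - 1, by omega, hf, ?_, ?_, ?_⟩
  · have a1 := hB.mono f (k - 1) (by omega) (by omega)
    have a2 := hB.mono (k - 1) (k - 1 + 1) (by omega) (by omega)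
    have a3 := hB.mono (k - 1 + 1) i (by omega) (by omega)
    omega
  · have := hS.2 e he e' he' hne (k - 1) f (by omega) hf
    by_contra hc
    exact hmin ⟨by omega, by omega⟩
  · rwa [show k - 1 + 1 = k by omega]

theorem exists_cut {α : Type*} {ρ : ℕ} {x : α → ℕ → ℕ} {S : Finset α} {β : ℕ → ℕ} {j : ℕ}
    (hB : Blocks ρ x S β j) (hS : Sys ρ x S) {e e' : α}
    (he : e ∈ S) (he' : e' ∈ S) (hne : e ≠ e') {b : ℕ}
    (h : ¬ Below ρ x β b e e') (h' : ¬ Below ρ x β b e' e) :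
    ∃ s f, Cut ρ x β e e' s f ∨ Cut ρ x β e' e s f := by
  unfold Below at h h'
  push Not at h h'
  obtain ⟨i, i', hi, hi', hib, hib', hx⟩ := h
  obtain ⟨k, k', hk, hk', hkb, hkb', hx'⟩ := h'
  have hex : ∃ f, f < ρ ∧ β f = b := ⟨i, hi, hib⟩
  obtain ⟨hf1, hf2⟩ := Nat.find_spec hex
  have m1 := Nat.find_min' hex ⟨hi', hib'⟩
  have m2 := Nat.find_min' hex ⟨hk', hkb'⟩
  generalize Nat.find hex = f at *
  have g1 := hS.le he' m1 hi'
  have g2 := hS.le he m2 hk'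
  have d1 := hS.2 e he e' he' hne i f hi hf1
  have d2 := hS.2 e he e' he' hne f k hf1 hk
  have d3 := hS.2 e he e' he' hne f f hf1 hf1
  rcases lt_or_gt_of_ne d3 with hlt | hlt
  · obtain ⟨s, hs⟩ := exists_cut_one hB hS he he' hne hf1 hi (by omega) hlt (by omega)
    exact ⟨s, f, Or.inl hs⟩
  · obtain ⟨s, hs⟩ := exists_cut_one hB hS he' he hne.symm hf1 hk (by omega) hlt (by omega)
    exact ⟨s, f, Or.inr hs⟩

theorem blocks_split {α : Type*} {ρ : ℕ} {x : α → ℕ → ℕ} {A A' : Finset α} {β : ℕ → ℕ} {j : ℕ}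
    (hB : Blocks ρ x A β j) (hS : Sys ρ x A) (hA' : A' ⊆ A) {e0 : α} {s f : ℕ} (hs : s + 1 < ρ)
    (hss : β s = β (s + 1)) (hcut : ∀ e ∈ A', Cut ρ x β e e0 s f) :
    Blocks ρ x A' (fun i => if i ≤ s then β i else β i + 1) (j + 1) := by
  refine ⟨?_, ?_, ?_, ?_⟩
  · intro i i' hii hi'
    have := hB.mono i i' hii hi'
    split_ifs <;> omega
  · intro i hi
    have := hB.lt i hi
    split_ifs <;> omega
  · intro b hb
    have hsj := hB.lt s (by omega)
    rcases lt_trichotomy b (β s) with h | h | h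
    · obtain ⟨i, hi, hib⟩ := hB.surj b (by omega)
      have : i ≤ s := by
        by_contra hc
        have := hB.mono s i (by omega) hi
        omega
      exact ⟨i, hi, by simp [this, hib]⟩
    · exact ⟨s, by omega, by simp [h]⟩
    · by_cases h1 : b = β s + 1
      · exact ⟨s + 1, hs, by simp [h1, hss]⟩
      · obtain ⟨i, hi, hib⟩ := hB.surj (b - 1) (by omega)
        have : ¬ i ≤ s := by
          intro hc
          have := hB.mono i s hc (by omega)
          omega
        exact ⟨i, hi, by simp only [this, if_false]; omega⟩
  · intro e he e' he' i i' hi hi' hlt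
    by_cases hb : β i < β i'
    · exact hB.sep e (hA' he) e' (hA' he') i i' hi hi' hb
    · have h0 := hlt
      have h1 : i ≤ s ∧ s < i' := by
        split_ifs at hlt <;> omega
      have g1 := hS.le (hA' he) h1.1 (show s < ρ by omega)
      have g2 := hS.le (hA' he') (show s + 1 ≤ i' by omega) hi'
      have g3 := (hcut e he).2.2.2.1
      have g4 := (hcut e' he').2.2.2.2
      omega

theorem split_step {α : Type*} [DecidableEq α] {ρ : ℕ} {x : α → ℕ → ℕ} {A : Finset α} {β : ℕ → ℕ}
    {j : ℕ} (hj : 0 < j)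
    (hB : Blocks ρ x A β j) (hS : Sys ρ x A)
    (hanti : ∀ E ∈ (Ico 1 j).powerset, ∀ a ∈ A, ∀ b ∈ A, a ≠ b → ¬ SLt ρ x β j E a b)
    (h2 : 2 ≤ A.card) :
    ∃ A' ⊆ A, ∃ β', Blocks ρ x A' β' (j + 1) ∧ A.card ≤ 1 + 2 * ρ ^ 2 * A'.card := by
  classical
  have hone : ∀ e ∈ A, ∀ e' ∈ A, e ≠ e' → Below ρ x β 0 e e' →
      ∃ b, ¬ Below ρ x β b e e' ∧ ¬ Below ρ x β b e' e := by
    intro e he e' he' hne h0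
    by_contra hc
    push Not at hc
    apply hanti ((Ico 1 j).filter (fun b => Below ρ x β b e e')) (by simp) e he e' he' hne
    intro b hb
    by_cases h : Below ρ x β b e e'
    · refine ⟨fun _ => h, fun hn => absurd ?_ hn⟩
      rcases Nat.eq_zero_or_pos b with h' | h'
      · exact Or.inl h'
      · exact Or.inr (by simp only [mem_filter, mem_Ico]; exact ⟨by omega, h⟩)
    · refine ⟨?_, fun _ => hc b h⟩
      rintro (rfl | h')
      · exact h0
      · exact (mem_filter.1 h').2
  have hcutE : ∀ e ∈ A, ∀ e' ∈ A, e ≠ e' → ∃ s f, Cut ρ x β e e' s f ∨ Cut ρ x β e' e s f := by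
    intro e he e' he' hne
    by_cases h1 : Below ρ x β 0 e e'
    · obtain ⟨b, hb, hb'⟩ := hone e he e' he' hne h1
      exact exists_cut hB hS he he' hne hb hb'
    · by_cases h1' : Below ρ x β 0 e' e
      · obtain ⟨b, hb, hb'⟩ := hone e' he' e he hne.symm h1'
        exact exists_cut hB hS he he' hne hb' hb
      · exact exists_cut hB hS he he' hne h1 h1'
  let P : Finset (α × ℕ × ℕ) := A ×ˢ (range ρ ×ˢ range ρ)
  let N : α × ℕ × ℕ → Finset α := fun z => A.filter (fun e => Cut ρ x β e z.1 z.2.1 z.2.2)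
  have hP : P.Nonempty := by
    obtain ⟨e, he, e', he', hne⟩ := one_lt_card.1 h2
    obtain ⟨s, f, h⟩ := hcutE e he e' he' hne
    have : s < ρ ∧ f < ρ := by rcases h with h | h <;> exact ⟨by have := h.1; omega, h.2.1⟩
    exact ⟨(e, s, f), by simp [P, he, this]⟩
  obtain ⟨z, hz, hmax⟩ := exists_max_image P (fun z => (N z).card) hP
  have hcov : A.offDiag ⊆ P.biUnion (fun z => (N z).image (fun e => (e, z.1)) ∪
      (N z).image (fun e => (z.1, e))) := by
    rintro ⟨e, e'⟩ hee
    obtain ⟨he, he', hne⟩ := mem_offDiag.1 hee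
    obtain ⟨s, f, h⟩ := hcutE e he e' he' hne
    simp only [mem_biUnion, mem_union, mem_image]
    rcases h with h | h
    · refine ⟨(e', s, f), ?_, Or.inl ⟨e, ?_, rfl⟩⟩
      · have := h.1; have := h.2.1
        simp only [P, mem_product, mem_range]
        exact ⟨he', by omega, by omega⟩
      · exact mem_filter.2 ⟨he, h⟩
    · refine ⟨(e, s, f), ?_, Or.inr ⟨e', ?_, rfl⟩⟩
      · have := h.1; have := h.2.1
        simp only [P, mem_product, mem_range]
        exact ⟨he, by omega, by omega⟩
      · exact mem_filter.2 ⟨he', h⟩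
  have hcard := (card_le_card hcov).trans (card_biUnion_le_card_mul P _ (2 * (N z).card) (by
    intro w hw
    have h1 := hmax w hw
    have h2 := card_union_le ((N w).image (fun e => (e, w.1))) ((N w).image (fun e => (w.1, e)))
    have h3 := card_image_le (s := N w) (f := fun e => (e, w.1))
    have h4 := card_image_le (s := N w) (f := fun e => (w.1, e))
    omega))
  rw [offDiag_card] at hcard
  have hPc : P.card = A.card * (ρ * ρ) := by simp [P]
  rw [hPc] at hcard
  have hle : A.card ≤ 1 + 2 * ρ ^ 2 * (N z).card := by
    have : A.card * A.card ≤ A.card * (1 + 2 * ρ ^ 2 * (N z).card) := by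
      have e1 : A.card * (1 + 2 * ρ ^ 2 * (N z).card) =
        A.card * (ρ * ρ) * (2 * (N z).card) + A.card := by ring
      rw [e1]; omega
    exact Nat.le_of_mul_le_mul_left this (by omega)
  have hNz : (N z).Nonempty := by
    rw [← card_pos]
    by_contra hc
    have : (N z).card = 0 := by omega
    rw [this] at hle
    omega
  obtain ⟨e1, he1⟩ := hNz
  have hc1 := (mem_filter.1 he1).2
  exact ⟨N z, filter_subset _ _, _, blocks_split hB hS (filter_subset _ _) hc1.1 hc1.2.2.1
    (fun e he => (mem_filter.1 he).2), hle⟩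

theorem clique_aux {α : Type*} (ρ : ℕ) (hρ : 0 < ρ) (d : ℕ) :
    ∀ k, k + d = ρ → ∃ C : ℕ, ∀ (x : α → ℕ → ℕ) (S : Finset α) (β : ℕ → ℕ) (t : ℕ), 1 ≤ t →
      Blocks ρ x S β (k + 1) → Sys ρ x S → (∀ S' ⊆ S, Good ρ x S' → S'.card ≤ t) →
      S.card ≤ C * t ^ (2 ^ ρ - 2 ^ k) := by
  classical
  induction d with
  | zero =>
    intro k hk
    refine ⟨0, fun x S β t ht hB => ?_⟩
    exfalso
    have hsub : range (k + 1) ⊆ (range ρ).image β := by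
      intro b hb
      obtain ⟨i, hi, h⟩ := hB.surj b (mem_range.1 hb)
      exact mem_image.2 ⟨i, mem_range.2 hi, h⟩
    have h1 := card_le_card hsub
    have h2 := card_image_le (s := range ρ) (f := β)
    simp only [card_range] at h1 h2
    omega
  | succ d ih =>
    intro k hk
    obtain ⟨C, hC⟩ := ih (k + 1) (by omega)
    refine ⟨1 + 2 * ρ ^ 2 * C, fun x S β t ht hB hS hgood => ?_⟩
    obtain ⟨A, hA, hanti, hcard⟩ := multi_mirsky (fun E => SLt ρ x β (k + 1) E)
      (Ico 1 (k + 1)).powerset (by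
        intro E _ a b c h1 h2 m hm
        exact ⟨fun h => Below.trans (hB.surj m hm) ((h1 m hm).1 h) ((h2 m hm).1 h),
          fun h => Below.trans (hB.surj m hm) ((h2 m hm).2 h) ((h1 m hm).2 h)⟩) (by
        intro E _ a h
        obtain ⟨i, hi, hib⟩ := hB.surj 0 (by omega)
        exact lt_irrefl _ ((h 0 (by omega)).1 (Or.inl rfl) i i hi hi hib hib)) t S (by
        intro E _ Cc hCc hch
        exact hgood Cc hCc (chain_good hρ (by omega) (hB.subset hCc) E hch))
    have hpc : ((Ico 1 (k + 1)).powerset).card = 2 ^ k := by simp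
    rw [hpc] at hcard
    have hAle : A.card ≤ (1 + 2 * ρ ^ 2 * C) * t ^ (2 ^ ρ - 2 ^ (k + 1)) := by
      have hpos : 1 ≤ t ^ (2 ^ ρ - 2 ^ (k + 1)) := Nat.one_le_pow _ _ ht
      by_cases h2 : 2 ≤ A.card
      · obtain ⟨A', hA', β', hB', hc'⟩ := split_step (by omega) (hB.subset hA) (hS.mono hA) hanti h2
        have := hC x A' β' t ht hB' (hS.mono (hA'.trans hA))
          (fun S' hS' => hgood S' (hS'.trans (hA'.trans hA)))
        calc A.card ≤ 1 + 2 * ρ ^ 2 * A'.card := hc'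
          _ ≤ 1 * t ^ (2 ^ ρ - 2 ^ (k + 1)) + 2 * ρ ^ 2 * (C * t ^ (2 ^ ρ - 2 ^ (k + 1))) := by
            gcongr
            omega
          _ = _ := by ring
      · calc A.card ≤ 1 * 1 := by omega
          _ ≤ _ := by gcongr; omega
    calc S.card ≤ t ^ 2 ^ k * A.card := hcard
      _ ≤ t ^ 2 ^ k * ((1 + 2 * ρ ^ 2 * C) * t ^ (2 ^ ρ - 2 ^ (k + 1))) := by gcongr
      _ = (1 + 2 * ρ ^ 2 * C) * t ^ (2 ^ k + (2 ^ ρ - 2 ^ (k + 1))) := by rw [pow_add]; ring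
      _ = _ := by
        congr 2
        have h1 : 2 ^ (k + 1) ≤ 2 ^ ρ := Nat.pow_le_pow_right (by norm_num) (by omega)
        have h2 : 2 ^ (k + 1) = 2 * 2 ^ k := by ring
        omega

theorem clique_main {α : Type*} (ρ : ℕ) (hρ : 0 < ρ) :
    ∃ C : ℕ, ∀ (x : α → ℕ → ℕ) (S : Finset α), Sys ρ x S →
      ∃ S' ⊆ S, Good ρ x S' ∧ S.card ≤ C * S'.card ^ (2 ^ ρ - 1) := by
  classical
  obtain ⟨C, hC⟩ := clique_aux (α := α) ρ hρ ρ 0 (by omega)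
  refine ⟨C, fun x S hS => ?_⟩
  have hgood0 : Good ρ x (∅ : Finset α) :=
    ⟨⟨fun _ _ => True, by simp⟩, 0, hρ, by simp, by simp⟩
  obtain ⟨S', hS', hmax⟩ := exists_max_image (S.powerset.filter (fun S' => Good ρ x S')) card
    ⟨∅, by simp [hgood0]⟩
  simp only [mem_filter, mem_powerset] at hS' hmax
  refine ⟨S', hS'.1, hS'.2, ?_⟩
  rcases S.eq_empty_or_nonempty with rfl | ⟨e, he⟩
  · simp
  · have h1 : 1 ≤ S'.card := by
      have := hmax {e} ⟨by simpa using he, ?_⟩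
      · simpa using this
      · refine ⟨⟨fun i j => True, ?_⟩, 0, hρ, by simp, by simp⟩
        intro a ha b hb hlt
        rw [mem_singleton.1 ha, mem_singleton.1 hb] at hlt
        exact absurd hlt (lt_irrefl _)
    have := hC x S (fun _ => 0) S'.card h1 ⟨by simp, by simp, ?_, by simp⟩ hS
      (fun T hT hG => hmax T ⟨hT, hG⟩)
    · simpa using this
    · intro b hb
      exact ⟨0, hρ, by omega⟩

end

/-- The `i`-th smallest element of `e`. -/
noncomputable def vx (e : Finset ℕ) (i : ℕ) : ℕ :=
  if h : i < e.card then e.orderEmbOfFin rfl ⟨i, h⟩ else 0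

theorem vx_mem {e : Finset ℕ} {i : ℕ} (h : i < e.card) : vx e i ∈ e := by
  unfold vx
  rw [dif_pos h]
  exact Finset.orderEmbOfFin_mem _ _ _

theorem vx_lt {e : Finset ℕ} {i j : ℕ} (hij : i < j) (h : j < e.card) : vx e i < vx e j := by
  unfold vx
  rw [dif_pos h, dif_pos (hij.trans h)]
  exact (e.orderEmbOfFin rfl).strictMono (by simpa using hij)

theorem vx_surj {e : Finset ℕ} {v : ℕ} (h : v ∈ e) : ∃ i, i < e.card ∧ vx e i = v := by
  have h2 : v ∈ Set.range (e.orderEmbOfFin rfl) := by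
    rw [Finset.range_orderEmbOfFin]; exact h
  obtain ⟨i, hi⟩ := h2
  refine ⟨i, i.2, ?_⟩
  unfold vx
  rw [dif_pos i.2]
  exact hi

theorem vx_sys {r : ℕ} {M : Finset (Finset ℕ)} (h : IsMatching r M) : Sys r vx M := by
  constructor
  · intro e he i j hij hj
    exact vx_lt hij (by rw [h.1 e he]; exact hj)
  · intro e he f hf hne i j hi hj heq
    have h1 := vx_mem (e := e) (i := i) (by rw [h.1 e he]; exact hi)
    have h2 := vx_mem (e := f) (i := j) (by rw [h.1 f hf]; exact hj)
    rw [heq] at h1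
    exact (Finset.disjoint_left.1 (h.2 e he f hf hne)) h1 h2

theorem mem_mSupport {M : Finset (Finset ℕ)} {v : ℕ} : v ∈ mSupport M ↔ ∃ e ∈ M, v ∈ e := by
  unfold mSupport
  rw [Finset.mem_sup]
  simp

theorem hasTwins_of_TW {r T : ℕ} (hr : 0 < r) {M : Finset (Finset ℕ)} (hM : IsMatching r M)
    (h : TW r vx M T) : HasTwins M T := by
  classical
  obtain ⟨ι, _, a, b, hT, hab, hne, hinj, hord⟩ := h
  have hS := vx_sys hM
  have eqa : ∀ i j s s', s < r → s' < r → vx (a i) s = vx (a j) s' → i = j ∧ s = s' := by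
    intro i j s s' hs hs' heq
    by_cases hij : a i = a j
    · refine ⟨hinj hij, ?_⟩
      rw [hij] at heq
      rcases lt_trichotomy s s' with h | h | h
      · have := hS.1 _ (hab j).1 _ _ h hs'
        omega
      · exact h
      · have := hS.1 _ (hab j).1 _ _ h hs
        omega
    · exact absurd heq (hS.2 _ (hab i).1 _ (hab j).1 hij _ _ hs hs')
  have eqb : ∀ i j s s', s < r → s' < r → vx (b i) s = vx (b j) s' → i = j ∧ s = s' := by
    intro i j s s' hs hs' heq
    apply eqa i j s s' hs hs'
    have h1 := hord i j s s' hs hs'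
    have h2 := hord j i s' s hs' hs
    omega
  have hbinj : Function.Injective b := by
    intro i j hij
    exact (eqb i j 0 0 hr hr (by rw [hij])).1
  -- the vertex map
  have hf : ∃ f : ℕ → ℕ, ∀ i s, s < r → f (vx (a i) s) = vx (b i) s := by
    refine ⟨fun v => if h : ∃ p : ι × ℕ, p.2 < r ∧ vx (a p.1) p.2 = v then
      vx (b h.choose.1) h.choose.2 else 0, ?_⟩
    intro i s hs
    have hex : ∃ p : ι × ℕ, p.2 < r ∧ vx (a p.1) p.2 = vx (a i) s := ⟨(i, s), hs, rfl⟩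
    dsimp only
    rw [dif_pos hex]
    have := eqa _ _ _ _ hex.choose_spec.1 hs hex.choose_spec.2
    rw [this.1, this.2]
  obtain ⟨f, hf⟩ := hf
  have ca : ∀ i, (a i).card = r := fun i => hM.1 _ (hab i).1
  have cb : ∀ i, (b i).card = r := fun i => hM.1 _ (hab i).2
  have suppA : ∀ v, v ∈ mSupport (Finset.univ.image a) ↔ ∃ i s, s < r ∧ vx (a i) s = v := by
    intro v
    rw [mem_mSupport]
    constructor
    · rintro ⟨e, he, hv⟩
      obtain ⟨i, -, rfl⟩ := Finset.mem_image.1 he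
      obtain ⟨s, hs, h⟩ := vx_surj hv
      exact ⟨i, s, by rw [← ca i]; exact hs, h⟩
    · rintro ⟨i, s, hs, rfl⟩
      exact ⟨a i, Finset.mem_image_of_mem _ (Finset.mem_univ _), vx_mem (by rw [ca i]; exact hs)⟩
  have suppB : ∀ v, v ∈ mSupport (Finset.univ.image b) ↔ ∃ i s, s < r ∧ vx (b i) s = v := by
    intro v
    rw [mem_mSupport]
    constructor
    · rintro ⟨e, he, hv⟩
      obtain ⟨i, -, rfl⟩ := Finset.mem_image.1 he
      obtain ⟨s, hs, h⟩ := vx_surj hv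
      exact ⟨i, s, by rw [← cb i]; exact hs, h⟩
    · rintro ⟨i, s, hs, rfl⟩
      exact ⟨b i, Finset.mem_image_of_mem _ (Finset.mem_univ _), vx_mem (by rw [cb i]; exact hs)⟩
  have himg : ∀ i, (a i).image f = b i := by
    intro i
    ext v
    rw [Finset.mem_image]
    constructor
    · rintro ⟨w, hw, rfl⟩
      obtain ⟨s, hs, rfl⟩ := vx_surj hw
      rw [ca i] at hs
      rw [hf i s hs]
      exact vx_mem (by rw [cb i]; exact hs)
    · intro hv
      obtain ⟨s, hs, rfl⟩ := vx_surj hv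
      rw [cb i] at hs
      exact ⟨vx (a i) s, vx_mem (by rw [ca i]; exact hs), hf i s hs⟩
  refine ⟨Finset.univ.image a, Finset.univ.image b, ?_, ?_, ?_, ⟨f, ⟨?_, ?_, ?_⟩, ?_, ?_⟩, ?_, ?_⟩
  · intro e he
    obtain ⟨i, -, rfl⟩ := Finset.mem_image.1 he
    exact (hab i).1
  · intro e he
    obtain ⟨i, -, rfl⟩ := Finset.mem_image.1 he
    exact (hab i).2
  · rw [Finset.disjoint_left]
    intro v h1 h2
    obtain ⟨i, s, hs, h⟩ := (suppA v).1 h1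
    obtain ⟨j, s', hs', h'⟩ := (suppB v).1 h2
    exact hS.2 _ (hab i).1 _ (hab j).2 (hne i j) _ _ hs hs' (h.trans h'.symm)
  · intro v hv
    obtain ⟨i, s, hs, rfl⟩ := (suppA v).1 hv
    exact (suppB _).2 ⟨i, s, hs, (hf i s hs).symm⟩
  · intro v hv w hw hvw
    obtain ⟨i, s, hs, rfl⟩ := (suppA v).1 hv
    obtain ⟨j, s', hs', rfl⟩ := (suppA w).1 hw
    rw [hf i s hs, hf j s' hs'] at hvw
    obtain ⟨rfl, rfl⟩ := eqb _ _ _ _ hs hs' hvw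
    rfl
  · intro v hv
    obtain ⟨i, s, hs, rfl⟩ := (suppB v).1 hv
    exact ⟨vx (a i) s, (suppA _).2 ⟨i, s, hs, rfl⟩, hf i s hs⟩
  · intro v hv w hw hvw
    obtain ⟨i, s, hs, rfl⟩ := (suppA v).1 hv
    obtain ⟨j, s', hs', rfl⟩ := (suppA w).1 hw
    rw [hf i s hs, hf j s' hs']
    exact (hord i j s s' hs hs').1 hvw
  · rw [Finset.image_image]
    apply Finset.image_congr
    intro i _
    exact (himg i).symm
  · rw [Finset.card_image_of_injective _ hinj, Finset.card_univ, hT]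
  · rw [Finset.card_image_of_injective _ hbinj, Finset.card_univ, hT]

theorem le_twinMax {M : Finset (Finset ℕ)} {k : ℕ} (h : HasTwins M k) : k ≤ twinMax M := by
  unfold twinMax
  apply le_csSup
  · refine ⟨M.card, ?_⟩
    rintro k ⟨M₁, M₂, h1, -, -, -, h5, -⟩
    rw [← h5]
    exact Finset.card_le_card h1
  · exact h

theorem exists_orderedMatching (r n : ℕ) (hr : 0 < r) : ∃ M, IsOrderedMatching r n M := by
  classical
  have key : ∀ k l v, v ∈ Finset.Icc (r * k + 1) (r * k + r) →
      v ∈ Finset.Icc (r * l + 1) (r * l + r) → k = l := by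
    intro k l v hk hl
    rw [Finset.mem_Icc] at hk hl
    by_contra hne
    rcases Nat.lt_or_gt_of_ne hne with h | h
    · have : r * (k + 1) ≤ r * l := Nat.mul_le_mul_left _ h
      rw [Nat.mul_add] at this
      omega
    · have : r * (l + 1) ≤ r * k := Nat.mul_le_mul_left _ h
      rw [Nat.mul_add] at this
      omega
  refine ⟨(Finset.range n).image (fun k => Finset.Icc (r * k + 1) (r * k + r)), ⟨?_, ?_⟩, ?_, ?_⟩
  · intro e he
    obtain ⟨k, -, rfl⟩ := Finset.mem_image.1 he
    rw [Nat.card_Icc]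
    omega
  · intro e he f hf hne
    obtain ⟨k, -, rfl⟩ := Finset.mem_image.1 he
    obtain ⟨l, -, rfl⟩ := Finset.mem_image.1 hf
    rw [Finset.disjoint_left]
    intro v h1 h2
    apply hne
    rw [key k l v h1 h2]
  · rw [Finset.card_image_of_injective, Finset.card_range]
    intro k l hkl
    refine key k l (r * k + 1) (by rw [Finset.mem_Icc]; omega) ?_
    dsimp only at hkl
    rw [← hkl, Finset.mem_Icc]
    omega
  · ext v
    rw [mem_mSupport, Finset.mem_Icc]
    constructor
    · rintro ⟨e, he, hv⟩
      obtain ⟨k, hk, rfl⟩ := Finset.mem_image.1 he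
      rw [Finset.mem_Icc] at hv
      have : r * (k + 1) ≤ r * n := Nat.mul_le_mul_left _ (Finset.mem_range.1 hk)
      rw [Nat.mul_add] at this
      omega
    · rintro ⟨h1, h2⟩
      refine ⟨_, Finset.mem_image_of_mem _ (Finset.mem_range.2 (?_ : (v - 1) / r < n)), ?_⟩
      · rw [Nat.div_lt_iff_lt_mul hr, Nat.mul_comm]
        omega
      · rw [Finset.mem_Icc]
        have := Nat.div_add_mod (v - 1) r
        have := Nat.mod_lt (v - 1) hr
        omega

theorem exists_TW (ρ : ℕ) (hρ : 0 < ρ) : ∃ C : ℕ, 0 < C ∧ ∀ M : Finset (Finset ℕ), 2 ≤ M.card →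
    Sys (ρ + 1) vx M → ∃ T, TW (ρ + 1) vx M T ∧ M.card ^ 3 ≤ C * T ^ (5 * (2 ^ ρ - 1)) := by
  obtain ⟨C, hC⟩ := clique_main (α := Finset ℕ) ρ hρ
  obtain ⟨K, hK⟩ : ∃ K : ℕ, K = 64 * (8000 ^ 5 * 32 ^ 3) := ⟨_, rfl⟩
  refine ⟨C ^ 3 * K ^ (2 ^ ρ - 1) + C ^ 3 + 1, by omega, ?_⟩
  intro M hM hS
  have hSr : Sys ρ vx M := by
    refine ⟨fun e he i j hij hj => hS.1 e he i j hij (by omega), ?_⟩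
    intro e he f hf hne i j hi hj
    exact hS.2 e he f hf hne i j (by omega) (by omega)
  obtain ⟨S', hsub, hgood, hcard⟩ := hC vx M hSr
  obtain ⟨D, hD⟩ : ∃ D : ℕ, D = 2 ^ ρ - 1 := ⟨_, rfl⟩
  rw [← hD] at hcard ⊢
  by_cases hm : 2 ≤ S'.card
  · have hS' : Sys (ρ + 1) vx S' := by
      refine ⟨fun e he => hS.1 e (hsub he), fun e he f hf => hS.2 e (hsub he) f (hsub hf)⟩
    obtain ⟨T, hT, hle⟩ := good_twins hρ _ S' rfl hm hS' hgood
    rw [← hK] at hle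
    refine ⟨T, hT.mono hsub, ?_⟩
    calc M.card ^ 3 ≤ (C * S'.card ^ D) ^ 3 := Nat.pow_le_pow_left hcard 3
      _ = C ^ 3 * (S'.card ^ 3) ^ D := by ring
      _ ≤ C ^ 3 * (K * T ^ 5) ^ D := Nat.mul_le_mul_left _ (Nat.pow_le_pow_left hle D)
      _ = C ^ 3 * K ^ D * T ^ (5 * D) := by rw [mul_pow, pow_mul]; ring
      _ ≤ _ := Nat.mul_le_mul_right _ (by omega)
  · refine ⟨1, TW.one hS hM, ?_⟩
    have h1 : S'.card ^ D ≤ 1 := by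
      calc S'.card ^ D ≤ 1 ^ D := Nat.pow_le_pow_left (by omega) D
        _ = 1 := one_pow _
    have h2 : M.card ≤ C := hcard.trans (by nlinarith)
    have h3 : M.card ^ 3 ≤ C ^ 3 := Nat.pow_le_pow_left h2 3
    rw [one_pow, mul_one]
    omega

/-- Theorem 1.2 / `thm:deterministic`.
For every fixed `r ≥ 2` there is `c = c(r) > 0` such that for all `n ≥ 2`,
`t^(r)(n) ≥ c · n^{(3/5)·(1/(2^{r-1}-1))}`. -/
theorem deterministic_lower_bound :
    ∀ r : ℕ, 2 ≤ r → ∃ c : ℝ, 0 < c ∧ ∀ n : ℕ, 2 ≤ n →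
      c * (n : ℝ) ^ (((3 : ℝ) / 5) * (1 / ((2 : ℝ) ^ (r - 1) - 1))) ≤ (minTwins r n : ℝ) := by
  intro r hr
  obtain ⟨ρ, rfl⟩ : ∃ ρ, r = ρ + 1 := ⟨r - 1, by omega⟩
  have hρ : 0 < ρ := by omega
  obtain ⟨C, hC0, hC⟩ := exists_TW ρ hρ
  obtain ⟨D, hD⟩ : ∃ D : ℕ, D = 2 ^ ρ - 1 := ⟨_, rfl⟩
  have h2ρ : 2 ≤ 2 ^ ρ := by
    calc 2 = 2 ^ 1 := rfl
      _ ≤ 2 ^ ρ := Nat.pow_le_pow_right (by norm_num) hρ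
  have hD1 : 0 < D := by omega
  have hDR : (2 : ℝ) ^ (ρ + 1 - 1) - 1 = (D : ℝ) := by
    have : (D : ℕ) + 1 = 2 ^ ρ := by omega
    have h' : ((D : ℝ) + 1) = 2 ^ ρ := by exact_mod_cast this
    rw [Nat.add_sub_cancel]
    linarith
  have hCR : (0 : ℝ) < C := by exact_mod_cast hC0
  have hDR0 : (0 : ℝ) < D := by exact_mod_cast hD1
  refine ⟨((C : ℝ) ^ ((1 : ℝ) / (5 * D)))⁻¹, by positivity, ?_⟩
  intro n hn
  rw [hDR]
  have hne : {t | ∃ M, IsOrderedMatching (ρ + 1) n M ∧ twinMax M = t}.Nonempty := by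
    obtain ⟨M, hM⟩ := exists_orderedMatching (ρ + 1) n (by omega)
    exact ⟨_, M, hM, rfl⟩
  obtain ⟨M, hM, hMt⟩ := Nat.sInf_mem hne
  change twinMax M = minTwins (ρ + 1) n at hMt
  rw [← hMt]
  obtain ⟨T, hT, hle⟩ := hC M (by rw [hM.2.1]; exact hn) (vx_sys hM.1)
  rw [← hD, hM.2.1] at hle
  have hT2 : T ≤ twinMax M := le_twinMax (hasTwins_of_TW (by omega) hM.1 hT)
  have hT3 : (T : ℝ) ≤ (twinMax M : ℝ) := by exact_mod_cast hT2
  refine le_trans ?_ hT3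
  rw [inv_mul_le_iff₀ (by positivity)]
  have hleR : (n : ℝ) ^ 3 ≤ C * (T : ℝ) ^ (5 * D) := by exact_mod_cast hle
  have hn0 : (0 : ℝ) ≤ n := Nat.cast_nonneg n
  have hT0 : (0 : ℝ) ≤ T := Nat.cast_nonneg T
  have h5 : ((5 * D : ℕ) : ℝ) = 5 * (D : ℝ) := by push_cast; ring
  have h1 : ((n : ℝ) ^ 3) ^ ((1 : ℝ) / (5 * D)) = (n : ℝ) ^ (((3 : ℝ) / 5) * (1 / (D : ℝ))) := by
    rw [← Real.rpow_natCast, ← Real.rpow_mul hn0]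
    congr 1
    push_cast
    field_simp
  have h2 : ((T : ℝ) ^ (5 * D)) ^ ((1 : ℝ) / (5 * D)) = T := by
    rw [← Real.rpow_natCast, ← Real.rpow_mul hT0, h5, mul_one_div_cancel (by positivity),
      Real.rpow_one]
  rw [← h1]
  calc ((n : ℝ) ^ 3) ^ ((1 : ℝ) / (5 * D)) ≤ (C * (T : ℝ) ^ (5 * D)) ^ ((1 : ℝ) / (5 * D)) :=
        Real.rpow_le_rpow (by positivity) hleR (by positivity)
    _ = _ := by rw [Real.mul_rpow hCR.le (by positivity), h2]
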